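/- (Littlewood, 1914) The difference π(x) − Li(x) changes sign infinitely often: for every real T there exist real numbers x > T and y > T such that π(x) > Li(x) and π(y) < Li(y). -/

import Mathlib

open Real Filter Set

/-- `Li(x) = ∫₂ˣ dt/log t`. -/
noncomputable def Li (x : ℝ) : ℝ := ∫ t in (2:ℝ)..x, 1 / Real.log t

/-- `π(x)`: the number of primes `p ≤ x`. -/
noncomputable def primePi (x : ℝ) : ℕ := Nat.card {p : ℕ | p.Prime ∧ (p : ℝ) ≤ x}

section
namespace LW
open Complex Topology

/-- the entire function `(s-1) ζ(s)` -/
noncomputable def Zt : ℂ → ℂ := Function.update (fun s => (s - 1) * riemannZeta s) 1 1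

lemma Zt_of_ne {s : ℂ} (hs : s ≠ 1) : Zt s = (s - 1) * riemannZeta s := by
  simp [Zt, Function.update_of_ne hs]

lemma Zt_one : Zt 1 = 1 := by simp [Zt]

lemma Zt_differentiable : Differentiable ℂ Zt := by
  intro s
  by_cases hs : s = 1
  · subst hs
    have h1 : ContinuousAt Zt 1 := by
      unfold Zt
      rw [continuousAt_update_same]
      exact riemannZeta_residue_one
    have h2 : ∀ᶠ z in 𝓝[≠] (1:ℂ), DifferentiableAt ℂ Zt z := by
      filter_upwards [self_mem_nhdsWithin] with z hz
      have : Zt =ᶠ[𝓝 z] fun s => (s - 1) * riemannZeta s := by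
        filter_upwards [isOpen_ne.mem_nhds hz] with w hw using Zt_of_ne hw
      rw [this.differentiableAt_iff]
      exact (differentiableAt_id.sub_const 1).mul (differentiableAt_riemannZeta hz)
    exact (Complex.analyticAt_of_differentiable_on_punctured_nhds_of_continuousAt h2 h1).differentiableAt
  · have : Zt =ᶠ[𝓝 s] fun s => (s - 1) * riemannZeta s := by
      filter_upwards [isOpen_ne.mem_nhds hs] with w hw using Zt_of_ne hw
    rw [this.differentiableAt_iff]
    exact (differentiableAt_id.sub_const 1).mul (differentiableAt_riemannZeta hs)

/-- trapezoid terms, times `s - 1` (index shifted by one) -/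
noncomputable def tz (n : ℕ) (s : ℂ) : ℂ :=
  (s - 1) * (((n:ℂ) + 1) ^ (-s) + ((n:ℂ) + 2) ^ (-s)) / 2
    + (((n:ℂ) + 2) ^ (1 - s) - ((n:ℂ) + 1) ^ (1 - s))

lemma tz_differentiable (n : ℕ) : Differentiable ℂ (tz n) := by
  have h1 : ((n:ℂ) + 1) ≠ 0 := by exact_mod_cast Nat.succ_ne_zero n
  have h2 : ((n:ℂ) + 2) ≠ 0 := by exact_mod_cast Nat.succ_ne_zero (n+1)
  intro s
  unfold tz
  have e1 : DifferentiableAt ℂ (fun s : ℂ => ((n:ℂ)+1) ^ (-s)) s :=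
    (differentiableAt_id.neg).const_cpow (Or.inl h1)
  have e2 : DifferentiableAt ℂ (fun s : ℂ => ((n:ℂ)+2) ^ (-s)) s :=
    (differentiableAt_id.neg).const_cpow (Or.inl h2)
  have e3 : DifferentiableAt ℂ (fun s : ℂ => ((n:ℂ)+1) ^ (1-s)) s :=
    (differentiableAt_id.const_sub 1).const_cpow (Or.inl h1)
  have e4 : DifferentiableAt ℂ (fun s : ℂ => ((n:ℂ)+2) ^ (1-s)) s :=
    (differentiableAt_id.const_sub 1).const_cpow (Or.inl h2)
  fun_prop

lemma tz_eq_integral (n : ℕ) (s : ℂ) (hs : s ≠ 1) :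
    tz n s = (s - 1) * (s * (s + 1)) *
      ∫ x in ((n:ℝ)+1)..((n:ℝ)+2), ((x - (n+1)) * (n + 2 - x) / 2 : ℝ) * (x:ℂ) ^ (-s - 2) := by
  have hpos : ∀ x ∈ uIcc ((n:ℝ)+1) ((n:ℝ)+2), 0 < x := by
    intro x hx
    rw [uIcc_of_le (by linarith)] at hx
    have := hx.1; have : (0:ℝ) ≤ n := n.cast_nonneg; linarith
  have key : ∫ x in ((n:ℝ)+1)..((n:ℝ)+2),
      ((s - 1) * (s * (s + 1))) * (((x - (n+1)) * (n + 2 - x) / 2 : ℝ) * (x:ℂ) ^ (-s - 2)) = tz n s := by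
    have hd : ∀ x ∈ uIcc ((n:ℝ)+1) ((n:ℝ)+2), HasDerivAt
        (fun x : ℝ => (s - 1) * (-s * (((x:ℂ) - (n+1)) * (n + 2 - x) / 2) * (x:ℂ) ^ (-s-1)
          - ((2 * n + 3 - 2 * x) / 2) * (x:ℂ) ^ (-s)) + (x:ℂ) ^ (1 - s))
        (((s - 1) * (s * (s + 1))) * (((x - (n+1)) * (n + 2 - x) / 2 : ℝ) * (x:ℂ) ^ (-s - 2))) x := by
      intro x hx
      have hx0 := hpos x hx
      have hsl : (x:ℂ) ∈ slitPlane := by simp [hx0]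
      have hxc : (x:ℂ) ≠ 0 := by exact_mod_cast hx0.ne'
      have p : ∀ a : ℂ, HasDerivAt (fun z : ℂ => z ^ a) (a * (x:ℂ) ^ (a - 1)) (x:ℂ) := by
        intro a
        have := (hasDerivAt_id (x:ℂ)).cpow_const (c := a) hsl
        simpa using this
      have h1 := p (-s-1)
      have h2 := p (-s)
      have h3 := p (1-s)
      have q : HasDerivAt (fun z : ℂ => ((z - (n+1)) * (n + 2 - z) / 2))
          ((1 * (n + 2 - (x:ℂ)) + ((x:ℂ) - (n+1)) * (-1)) / 2) (x:ℂ) :=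
        (((hasDerivAt_id (x:ℂ)).sub_const _).mul ((hasDerivAt_id (x:ℂ)).const_sub _)).div_const 2
      have q2 : HasDerivAt (fun z : ℂ => ((2 * n + 3 - 2 * z) / 2)) ((-(2 * 1)) / 2) (x:ℂ) :=
        (((hasDerivAt_id (x:ℂ)).const_mul 2).const_sub _).div_const 2
      have := (((((q.const_mul (-s)).mul h1).sub (q2.mul h2)).const_mul (s-1)).add h3).comp_ofReal
      refine this.congr_deriv ?_
      have e1 : (x:ℂ) ^ (-s - 1) = (x:ℂ) ^ (-s-2) * x := by
        rw [show (-s - 1) = (-s-2) + 1 by ring, cpow_add _ _ hxc, cpow_one]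
      have e2 : (x:ℂ) ^ (-s) = (x:ℂ) ^ (-s-2) * x * x := by
        rw [show (-s) = (-s-2) + 1 + 1 by ring, cpow_add _ _ hxc, cpow_add _ _ hxc, cpow_one]
        ring_nf
      rw [show (-s - 1 - 1) = -s - 2 by ring, show (1 - s - 1) = -s by ring, e1, e2]
      push_cast
      ring
    rw [intervalIntegral.integral_eq_sub_of_hasDerivAt hd]
    · unfold tz
      push_cast
      have hn1 : ((n:ℂ)+1) ≠ 0 := by exact_mod_cast Nat.succ_ne_zero n
      ring
    · apply ContinuousOn.intervalIntegrable
      intro x hx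
      have hx0 := hpos x hx
      apply ContinuousAt.continuousWithinAt
      have : ContinuousAt (fun x : ℝ => (x:ℂ) ^ (-s-2)) x :=
        (continuousAt_cpow_const (by simp [hx0])).comp continuous_ofReal.continuousAt
      fun_prop
  rw [← key, intervalIntegral.integral_const_mul]

lemma tz_norm_le (n : ℕ) (s : ℂ) (hs : -2 ≤ s.re) :
    ‖tz n s‖ ≤ ‖s - 1‖ * (‖s‖ * ‖s + 1‖) * ((n:ℝ) + 1) ^ (-s.re - 2) := by
  by_cases h1 : s = 1
  · subst h1
    have h1 : ((n:ℂ) + 1) ≠ 0 := by exact_mod_cast Nat.succ_ne_zero n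
    have h2 : ((n:ℂ) + 2) ≠ 0 := by exact_mod_cast Nat.succ_ne_zero (n+1)
    simp [tz]
  rw [tz_eq_integral n s h1, norm_mul, norm_mul, norm_mul]
  gcongr
  have hn : (0:ℝ) ≤ n := n.cast_nonneg
  have := intervalIntegral.norm_integral_le_of_norm_le_const (a := (n:ℝ)+1) (b := (n:ℝ)+2)
    (C := ((n:ℝ)+1) ^ (-s.re - 2))
    (f := fun x : ℝ => ((x - (n+1)) * (n + 2 - x) / 2 : ℝ) * (x:ℂ) ^ (-s - 2)) ?_
  · refine this.trans (le_of_eq ?_)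
    rw [show (n:ℝ) + 2 - (n+1) = 1 by ring]; simp
  · intro x hx
    rw [uIoc_of_le (by linarith)] at hx
    obtain ⟨ha, hb⟩ := hx
    have hx0 : 0 < x := by linarith
    rw [norm_mul, norm_cpow_eq_rpow_re_of_pos hx0, norm_real, Real.norm_eq_abs]
    have : |(x - (n+1)) * (n + 2 - x) / 2| ≤ 1 := by
      rw [abs_le]; constructor <;> nlinarith
    calc _ ≤ 1 * x ^ ((-s-2).re) := by gcongr
      _ = x ^ (-s.re - 2) := by simp
      _ ≤ _ := Real.rpow_le_rpow_of_nonpos (by linarith) ha.le (by linarith)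
end LW
end

section
namespace LW
open Complex Topology

lemma summable_tz_bound (a : ℝ) (ha : -1 < a) : Summable (fun n : ℕ => ((n:ℝ) + 1) ^ (-a - 2)) := by
  have := (summable_nat_add_iff 1).2 (Real.summable_nat_rpow.2 (show -a - 2 < -1 by linarith))
  simpa using this

lemma summable_tz (s : ℂ) (hs : -1 < s.re) : Summable (fun n => tz n s) :=
  Summable.of_norm_bounded ((summable_tz_bound s.re hs).mul_left _)
    (fun n => tz_norm_le n s (by linarith))

lemma tz_partial (s : ℂ) (N : ℕ) : ∑ n ∈ Finset.range N, tz n s =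
    (s - 1) * ((∑ n ∈ Finset.range N, ((n:ℂ) + 1) ^ (-s)) +
      (∑ n ∈ Finset.range (N+1), ((n:ℂ) + 1) ^ (-s)) - 1) / 2 + (((N:ℂ) + 1) ^ (1 - s) - 1) := by
  induction N with
  | zero => simp
  | succ N ih =>
    rw [Finset.sum_range_succ, ih, Finset.sum_range_succ _ (N+1), Finset.sum_range_succ _ N, tz]
    push_cast
    rw [show (N:ℂ) + 1 + 1 = N + 2 by ring]
    ring

lemma Zt_eq_of_one_lt (s : ℂ) (hs : 1 < s.re) : Zt s = 1 + (s - 1) / 2 + ∑' n, tz n s := by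
  have hs1 : s ≠ 1 := by rintro rfl; simp at hs
  have h1 : Tendsto (fun N => ∑ n ∈ Finset.range N, tz n s) atTop (𝓝 (∑' n, tz n s)) :=
    (summable_tz s (by linarith)).hasSum.tendsto_sum_nat
  have hz : Tendsto (fun N => ∑ n ∈ Finset.range N, ((n:ℂ) + 1) ^ (-s)) atTop (𝓝 (riemannZeta s)) := by
    have hsum : Summable (fun n : ℕ => ((n:ℂ) + 1) ^ (-s)) := by
      have h := (summable_nat_add_iff 1).2 (Complex.summable_one_div_nat_cpow.2 hs)
      refine h.congr fun n => ?_
      rw [cpow_neg, one_div]; push_cast; rfl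
    rw [zeta_eq_tsum_one_div_nat_add_one_cpow hs]
    have := hsum.hasSum.tendsto_sum_nat
    convert this using 3
    ext n
    rw [cpow_neg, one_div]
  have hz2 := hz.comp (tendsto_add_atTop_nat 1)
  have hp : Tendsto (fun N : ℕ => ((N:ℂ) + 1) ^ (1 - s)) atTop (𝓝 0) := by
    rw [tendsto_zero_iff_norm_tendsto_zero]
    have : ∀ N : ℕ, ‖((N:ℂ) + 1) ^ (1 - s)‖ = ((N:ℝ) + 1) ^ (-(s.re - 1)) := by
      intro N
      have := norm_cpow_eq_rpow_re_of_pos (x := (N:ℝ)+1) (by positivity) (1 - s)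
      push_cast at this
      rw [this]; simp
    simp_rw [this]
    exact (tendsto_rpow_neg_atTop (by linarith)).comp
      (tendsto_atTop_add_const_right _ _ tendsto_natCast_atTop_atTop)
  have h2 : Tendsto (fun N => ∑ n ∈ Finset.range N, tz n s) atTop
      (𝓝 ((s - 1) * (riemannZeta s + riemannZeta s - 1) / 2 + (0 - 1))) := by
    simp_rw [tz_partial]
    exact ((((hz.add hz2).sub_const 1).const_mul _).div_const 2).add (hp.sub_const 1)
  rw [tendsto_nhds_unique h1 h2, Zt_of_ne hs1]
  ring

lemma tsum_tz_differentiableOn :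
    DifferentiableOn ℂ (fun s => ∑' n, tz n s) {s | -1 < s.re} := by
  intro s0 hs0
  apply DifferentiableAt.differentiableWithinAt
  have hs0 : -1 < s0.re := hs0
  set a := (s0.re - 1) / 2 with ha
  set U : Set ℂ := {s | a < s.re} ∩ Metric.ball 0 (‖s0‖ + 1)
  have hU : IsOpen U := (isOpen_lt continuous_const continuous_re).inter Metric.isOpen_ball
  have hmem : s0 ∈ U := ⟨by simp [ha]; linarith, by simp⟩
  set B := ‖s0‖ + 2
  have := differentiableOn_tsum_of_summable_norm (F := fun n s => tz n s) (U := U)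
    (u := fun n : ℕ => (B * (B * B)) * ((n:ℝ) + 1) ^ (-a - 2))
    ((summable_tz_bound a (by linarith)).mul_left _)
    (fun n => (tz_differentiable n).differentiableOn) hU (by
      rintro n w ⟨hw, hw2⟩
      simp only [mem_ofPred_eq] at hw
      have hw3 : ‖w‖ < ‖s0‖ + 1 := by simpa using hw2
      refine (tz_norm_le n w (by linarith)).trans ?_
      have e1 : ‖w - 1‖ ≤ B := by
        refine (norm_sub_le _ _).trans ?_; simp [B]; linarith
      have e2 : ‖w + 1‖ ≤ B := by
        refine (norm_add_le _ _).trans ?_; simp [B]; linarith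
      have e3 : ‖w‖ ≤ B := by simp [B]; linarith
      gcongr
      · have : (0:ℝ) ≤ n := n.cast_nonneg
        linarith)
  exact this.differentiableAt (hU.mem_nhds hmem)

lemma Zt_eq (s : ℂ) (hs : -1 < s.re) : Zt s = 1 + (s - 1) / 2 + ∑' n, tz n s := by
  have hO : IsOpen {s : ℂ | -1 < s.re} := isOpen_lt continuous_const continuous_re
  have hf : AnalyticOnNhd ℂ Zt {s | -1 < s.re} := Zt_differentiable.differentiableOn.analyticOnNhd hO
  have hg : AnalyticOnNhd ℂ (fun s => 1 + (s - 1) / 2 + ∑' n, tz n s) {s : ℂ | -1 < s.re} := by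
    apply DifferentiableOn.analyticOnNhd _ hO
    have := tsum_tz_differentiableOn
    fun_prop
  refine hf.eqOn_of_preconnected_of_eventuallyEq hg ((convex_halfSpace_re_gt (-1)).isPreconnected)
    (z₀ := 2) (by simp; norm_num) ?_ hs
  have : {s : ℂ | 1 < s.re} ∈ 𝓝 (2:ℂ) := (isOpen_lt continuous_const continuous_re).mem_nhds (by simp)
  filter_upwards [this] with s hs using Zt_eq_of_one_lt s hs

/-- polynomial growth -/
lemma Zt_growth : ∃ C : ℝ, 1 ≤ C ∧ ∀ s : ℂ, -(9/10) ≤ s.re → ‖Zt s‖ ≤ C * (1 + ‖s‖) ^ 3 := by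
  set K := ∑' n : ℕ, ((n:ℝ) + 1) ^ (-(-(9/10)) - 2 : ℝ) with hK
  have hsK := summable_tz_bound (-(9/10)) (by norm_num)
  have hK0 : 0 ≤ K := tsum_nonneg fun n => by positivity
  refine ⟨2 + K, by linarith, fun s hs => ?_⟩
  have hn := norm_nonneg s
  have e1 : ‖s - 1‖ ≤ 1 + ‖s‖ := by
    refine (norm_sub_le _ _).trans ?_; simp; linarith
  have e2 : ‖s + 1‖ ≤ 1 + ‖s‖ := by
    refine (norm_add_le _ _).trans ?_; simp; linarith
  have hb : ∀ n : ℕ, ‖tz n s‖ ≤ (1+‖s‖)^3 * ((n:ℝ) + 1) ^ (-(-(9/10)) - 2 : ℝ) := by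
    intro n
    refine (tz_norm_le n s (by linarith)).trans ?_
    have : (1+‖s‖)^3 = (1+‖s‖) * ((1+‖s‖)*(1+‖s‖)) := by ring
    rw [this]
    gcongr
    · linarith
    · have : (0:ℝ) ≤ n := n.cast_nonneg
      linarith
  have h2 : ‖∑' n, tz n s‖ ≤ (1+‖s‖)^3 * K := by
    rw [hK, ← tsum_mul_left]
    exact tsum_of_norm_bounded (hsK.mul_left _).hasSum hb
  rw [Zt_eq s (by linarith)]
  have h3 : ‖1 + (s - 1) / 2‖ ≤ 1 + (1 + ‖s‖)/2 := by
    refine (norm_add_le _ _).trans ?_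
    simp; linarith
  refine (norm_add_le _ _).trans ?_
  have : 1 + (1+‖s‖)/2 ≤ 2 * (1+‖s‖)^3 := by nlinarith [pow_nonneg hn 2, pow_nonneg hn 3]
  nlinarith

lemma Zt_real_ne_zero (x : ℝ) (h0 : 0 < x) (h1 : x < 1) : Zt x ≠ 0 := by
  have hsum := summable_tz x (by simp; linarith)
  have hre : ∀ n : ℕ, (tz n x) = (((x - 1) * (((n:ℝ)+1)^(-x) + ((n:ℝ)+2)^(-x))/2
      + (((n:ℝ)+2)^(1-x) - ((n:ℝ)+1)^(1-x)) : ℝ) : ℂ) := by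
    intro n
    have hn : (0:ℝ) ≤ n := n.cast_nonneg
    rw [tz]
    push_cast
    rw [ofReal_cpow (by linarith), ofReal_cpow (by linarith), ofReal_cpow (by linarith),
      ofReal_cpow (by linarith)]
    push_cast
    rfl
  have hlow : ∀ n : ℕ, -((1 - x)/2 * (((n:ℝ)+1)^(-x) - ((n:ℝ)+2)^(-x))) ≤ (tz n x).re := by
    intro n
    have hn : (0:ℝ) ≤ n := n.cast_nonneg
    rw [hre, ofReal_re]
    have hb := _root_.rpow_one_add_le_one_add_mul_self (s := -1/((n:ℝ)+2)) (p := 1 - x)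
      (by rw [le_div_iff₀ (by linarith)]; linarith) (by linarith) (by linarith)
    have e : 1 + -1/((n:ℝ)+2) = ((n:ℝ)+1)/((n:ℝ)+2) := by field_simp; ring
    rw [e, Real.div_rpow (by linarith) (by linarith), div_le_iff₀ (by positivity)] at hb
    have e2 : ((n:ℝ)+2)^(1-x) = ((n:ℝ)+2)^(-x) * ((n:ℝ)+2) := by
      rw [show (1 - x) = -x + 1 by ring, Real.rpow_add_one (by linarith)]
    rw [e2] at hb ⊢
    have e3 : (1 + (1 - x) * (-1 / ((n:ℝ) + 2))) * (((n:ℝ)+2)^(-x) * ((n:ℝ)+2))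
      = ((n:ℝ)+2)^(-x) * ((n:ℝ)+2) - (1-x) * ((n:ℝ)+2)^(-x) := by field_simp; ring
    rw [e3] at hb
    nlinarith
  have hpart : ∀ N : ℕ, -((1-x)/2) ≤ ∑ n ∈ Finset.range N, (tz n x).re := by
    intro N
    refine le_trans ?_ (Finset.sum_le_sum fun n _ => hlow n)
    have : ∑ n ∈ Finset.range N, -((1 - x)/2 * (((n:ℝ)+1)^(-x) - ((n:ℝ)+2)^(-x)))
        = -((1-x)/2 * (1 - ((N:ℝ)+1)^(-x))) := by
      induction N with
      | zero => simp
      | succ N ih =>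
        rw [Finset.sum_range_succ, ih]; push_cast
        rw [show (N:ℝ) + 1 + 1 = N + 2 by ring]; ring
    rw [this]
    have : 0 ≤ ((N:ℝ)+1)^(-x) := by positivity
    nlinarith
  have hlim : -((1-x)/2) ≤ (∑' n, tz n x).re := by
    have := (Complex.hasSum_re hsum.hasSum).tendsto_sum_nat
    exact ge_of_tendsto' this hpart
  intro h
  have := congrArg Complex.re (Zt_eq x (by simp; linarith))
  rw [h] at this
  have e : ((1:ℂ) + (x - 1)/2).re = 1 + (x-1)/2 := by
    have : ((1:ℂ) + (x - 1)/2) = ((1 + (x-1)/2 : ℝ) : ℂ) := by push_cast; ring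
    rw [this, ofReal_re]
  rw [add_re, e] at this
  simp at this
  linarith

end LW
end

section
namespace LW
open Complex Topology

lemma entire_order_ne_top {f : ℂ → ℂ} (hf : Differentiable ℂ f) (hne : ∃ z, f z ≠ 0) (a : ℂ) :
    analyticOrderAt f a ≠ ⊤ := by
  intro h
  rw [analyticOrderAt_eq_top] at h
  have hA : AnalyticOnNhd ℂ f univ := fun z _ => hf.analyticAt z
  obtain ⟨z, hz⟩ := hne
  exact hz (hA.eqOn_zero_of_preconnected_of_eventuallyEq_zero isPreconnected_univ (mem_univ a) h
    (mem_univ z))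

lemma factor_one {f : ℂ → ℂ} (hf : Differentiable ℂ f) (hne : ∃ z, f z ≠ 0) (a : ℂ) :
    ∃ g : ℂ → ℂ, Differentiable ℂ g ∧ (∀ z, f z = (z - a) ^ (analyticOrderNatAt f a) * g z) ∧
      g a ≠ 0 := by
  obtain ⟨k, hk, hka, he⟩ := ((hf.analyticAt a).analyticOrderNatAt_eq_iff
    (entire_order_ne_top hf hne a) (n := analyticOrderNatAt f a)).1 rfl
  set n := analyticOrderNatAt f a
  classical
  let g : ℂ → ℂ := fun z => if z = a then k a else f z / (z - a) ^ n
  refine ⟨g, ?_, ?_, by simpa [g] using hka⟩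
  · intro z
    by_cases hz : z = a
    · subst hz
      refine hk.differentiableAt.congr_of_eventuallyEq ?_
      filter_upwards [he] with w hw
      by_cases hwz : w = z
      · simp [g, hwz]
      · simp only [g, hwz, if_false]
        rw [hw, smul_eq_mul, mul_div_cancel_left₀ _ (pow_ne_zero _ (sub_ne_zero.2 hwz))]
    · have : g =ᶠ[𝓝 z] fun w => f w / (w - a) ^ n := by
        filter_upwards [isOpen_ne.mem_nhds hz] with w hw
        simp only [g, if_neg hw]
      refine DifferentiableAt.congr_of_eventuallyEq ?_ this
      refine (hf z).div (by fun_prop) (pow_ne_zero _ (sub_ne_zero.2 hz))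
  · intro z
    by_cases hz : z = a
    · subst hz
      have := he.self_of_nhds
      simpa [g] using this
    · simp only [g, hz, if_false]
      rw [mul_div_cancel₀ _ (pow_ne_zero _ (sub_ne_zero.2 hz))]

lemma factor {f : ℂ → ℂ} (hf : Differentiable ℂ f) (hne : ∃ z, f z ≠ 0) (Z : Finset ℂ) :
    ∃ g : ℂ → ℂ, Differentiable ℂ g ∧
      (∀ z, f z = (∏ a ∈ Z, (z - a) ^ (analyticOrderNatAt f a)) * g z) ∧ ∀ a ∈ Z, g a ≠ 0 := by
  classical
  induction Z using Finset.induction_on with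
  | empty => exact ⟨f, hf, by simp, by simp⟩
  | insert a Z ha ih =>
    obtain ⟨g, hg, hfg, hgz⟩ := ih
    have hgne : ∃ z, g z ≠ 0 := by
      obtain ⟨z, hz⟩ := hne
      exact ⟨z, fun h => hz (by rw [hfg, h, mul_zero])⟩
    obtain ⟨h, hh, hgh, hha⟩ := factor_one hg hgne a
    have hP : Differentiable ℂ (fun z => ∏ a ∈ Z, (z - a) ^ (analyticOrderNatAt f a)) := by
      fun_prop
    have hord : analyticOrderNatAt f a = analyticOrderNatAt g a := by
      have e : f = (fun z => ∏ a ∈ Z, (z - a) ^ (analyticOrderNatAt f a)) * g := by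
        ext z; exact hfg z
      have hPa : analyticOrderAt (fun z => ∏ a ∈ Z, (z - a) ^ (analyticOrderNatAt f a)) a = 0 := by
        rw [(hP.analyticAt a).analyticOrderAt_eq_zero]
        refine Finset.prod_ne_zero_iff.2 fun b hb => pow_ne_zero _ (sub_ne_zero.2 ?_)
        rintro rfl; exact ha hb
      have : analyticOrderAt f a = analyticOrderAt g a := by
        conv_lhs => rw [e]
        rw [analyticOrderAt_mul (hP.analyticAt a) (hg.analyticAt a), hPa, zero_add]
      rw [analyticOrderNatAt, analyticOrderNatAt, this]
    refine ⟨h, hh, ?_, ?_⟩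
    · intro z
      rw [Finset.prod_insert ha, hfg z, hgh z, hord]
      ring
    · intro b hb
      rcases Finset.mem_insert.1 hb with rfl | hb
      · exact hha
      · intro h0
        exact hgz b hb (by rw [hgh, h0, mul_zero])

lemma zeros_finite {f : ℂ → ℂ} (hf : Differentiable ℂ f) (hne : ∃ z, f z ≠ 0) {K : Set ℂ}
    (hK : IsCompact K) : (K ∩ {z | f z = 0}).Finite := by
  obtain ⟨x, hx⟩ := hne
  have hA : AnalyticOnNhd ℂ f univ := fun z _ => hf.analyticAt z
  have := hA.preimage_zero_mem_codiscrete hx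
  have h2 := (mem_codiscrete'.1 this)
  have hcl : IsClosed {z | f z = 0} := isClosed_eq hf.continuous continuous_const
  have h3 : IsCompact (K ∩ {z | f z = 0}) := hK.inter_right hcl
  refine h3.finite ?_
  have h4 : (f ⁻¹' {0}ᶜ)ᶜ = {z | f z = 0} := by ext; simp
  rw [h4] at h2
  have h5 := h2.2
  exact (isDiscrete_iff_discreteTopology.1 ( h5.mono inter_subset_right)).isDiscrete

/-- Jensen-type upper bound on zeros. -/
lemma zeros_upper {f : ℂ → ℂ} (hf : Differentiable ℂ f) {c : ℂ} (hc : f c ≠ 0) {r R M : ℝ}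
    (hr : 0 < r) (hrR : r < R) (hM : ∀ z, ‖z - c‖ ≤ R → ‖f z‖ ≤ M) (Z : Finset ℂ)
    (hZ : ∀ a ∈ Z, ‖a - c‖ ≤ r) :
    ((R - r) / r) ^ (∑ a ∈ Z, analyticOrderNatAt f a) ≤ M / ‖f c‖ := by
  obtain ⟨g, hg, hfg, -⟩ := factor hf ⟨c, hc⟩ Z
  set n := ∑ a ∈ Z, analyticOrderNatAt f a
  have hRr : 0 < R - r := by linarith
  have hgb : ‖g c‖ ≤ M / (R - r)^n := by
    refine Complex.norm_le_of_forall_mem_frontier_norm_le (U := Metric.ball c R)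
      Metric.isBounded_ball hg.diffContOnCl ?_ (subset_closure (Metric.mem_ball_self (by linarith)))
    intro z hz
    rw [frontier_ball _ (by linarith), mem_sphere_iff_norm] at hz
    have h1 := hM z hz.le
    rw [hfg, norm_mul, norm_prod] at h1
    rw [le_div_iff₀ (by positivity), mul_comm]
    refine le_trans (mul_le_mul_of_nonneg_right ?_ (norm_nonneg _)) h1
    rw [← Finset.prod_pow_eq_pow_sum]
    refine Finset.prod_le_prod (fun _ _ => by positivity) fun a ha => ?_
    rw [norm_pow]
    gcongr
    have := norm_sub_norm_le (z - c) (a - c)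
    rw [sub_sub_sub_cancel_right] at this
    linarith [hZ a ha]
  have hfc : ‖f c‖ ≤ r ^ n * ‖g c‖ := by
    rw [hfg, norm_mul, norm_prod]
    gcongr
    rw [← Finset.prod_pow_eq_pow_sum]
    refine Finset.prod_le_prod (fun _ _ => by positivity) fun a ha => ?_
    rw [norm_pow]
    gcongr
    rw [norm_sub_rev]; exact hZ a ha
  rw [div_pow, le_div_iff₀ (norm_pos_iff.2 hc), div_mul_eq_mul_div, div_le_iff₀ (by positivity)]
  rw [le_div_iff₀ (by positivity)] at hgb
  calc (R - r)^n * ‖f c‖ ≤ (R-r)^n * (r^n * ‖g c‖) := by gcongr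
    _ = (‖g c‖ * (R-r)^n) * r^n := by ring
    _ ≤ _ := by gcongr

lemma zeta_bounds : ∃ C : ℝ, 1 ≤ C ∧ ∀ s : ℂ, 11/10 ≤ s.re →
    ‖riemannZeta s‖ ≤ C ∧ 1 / C ≤ ‖riemannZeta s‖ := by
  have hS : LSeriesSummable 1 (11/10 : ℂ) := LSeriesSummable_one_iff.2 (by norm_num)
  set C := ∑' n, ‖LSeries.term 1 (11/10 : ℂ) n‖
  have key : ∀ (f : ℕ → ℂ) (s : ℂ), (∀ n, ‖f n‖ ≤ 1) → 11/10 ≤ s.re → ‖LSeries f s‖ ≤ C := by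
    intro f s hf hs
    have hb : ∀ n, ‖LSeries.term f s n‖ ≤ ‖LSeries.term 1 (11/10 : ℂ) n‖ := fun n =>
      (LSeries.norm_term_le s (by simpa using hf n)).trans
        (LSeries.norm_term_le_of_re_le_re 1 (by norm_num; linarith) n)
    exact tsum_of_norm_bounded hS.norm.hasSum hb
  have hz : ∀ s : ℂ, 11/10 ≤ s.re → ‖riemannZeta s‖ ≤ C := by
    intro s hs
    rw [← LSeries_one_eq_riemannZeta (by linarith)]
    exact key 1 s (by simp) hs
  have hm : ∀ s : ℂ, 11/10 ≤ s.re → 1 ≤ ‖riemannZeta s‖ * C := by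
    intro s hs
    have h1 := LSeries_one_mul_Lseries_moebius (s := s) (by linarith)
    rw [LSeries_one_eq_riemannZeta (by linarith)] at h1
    have h2 := congrArg norm h1
    rw [norm_mul, norm_one] at h2
    rw [← h2]
    gcongr
    refine key _ s (fun n => ?_) hs
    have := ArithmeticFunction.abs_moebius_le_one (n := n)
    rw [Complex.norm_intCast]
    exact_mod_cast this
  have hC0 : 0 ≤ C := tsum_nonneg fun _ => norm_nonneg _
  refine ⟨C + 1, by linarith, fun s hs => ⟨by linarith [hz s hs], ?_⟩⟩
  rw [div_le_iff₀ (by linarith)]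
  nlinarith [hm s hs, norm_nonneg (riemannZeta s)]

end LW
end

section
namespace LW
open Complex Topology

/-- multiplicity of the zero `1/2 + iγ` -/
noncomputable def mz (γ : ℝ) : ℕ := analyticOrderNatAt Zt (1/2 + γ * I)

lemma Zt_nonvanish : ∃ z, Zt z ≠ 0 := ⟨1, by simp [Zt_one]⟩

lemma Zt_ne_zero_of_one_le {s : ℂ} (hs : 1 ≤ s.re) : Zt s ≠ 0 := by
  by_cases h : s = 1
  · simp [h, Zt_one]
  · rw [Zt_of_ne h]
    exact mul_ne_zero (sub_ne_zero.2 h) (riemannZeta_ne_zero_of_one_le_re hs)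

lemma window_upper : ∃ K : ℝ, 0 < K ∧ ∀ t : ℝ, ∀ S : Finset ℝ, (∀ γ ∈ S, |γ - t| ≤ 1/2) →
    (∑ γ ∈ S, (mz γ : ℝ)) ≤ K * (1 + |t|) ^ (1/2 : ℝ) := by
  obtain ⟨C, hC, hCb⟩ := Zt_growth
  obtain ⟨C0, hC0, hC0b⟩ := zeta_bounds
  set L := Real.log (23/16)
  have hL : 0 < L := Real.log_pos (by norm_num)
  set A := C * 5^3 * (10 * C0)
  have hA : 0 < A := by positivity
  have hA1 : 1 ≤ A := by simp only [A]; nlinarith [mul_le_mul hC hC0 zero_le_one (by linarith)]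
  refine ⟨(Real.log A + 6) / L, div_pos (by linarith [Real.log_nonneg hA1]) hL,
    fun t S hS => ?_⟩
  set c : ℂ := 11/10 + t * I
  have hcre : c.re = 11/10 := by simp [c]; 
  have hc1 : c ≠ 1 := by intro h; rw [h] at hcre; norm_num at hcre
  have hc : Zt c ≠ 0 := Zt_ne_zero_of_one_le (by rw [hcre]; norm_num)
  have hct : ‖c‖ ≤ 11/10 + |t| := by
    refine (norm_add_le _ _).trans ?_
    simp
  have hcl : 1 / (10 * C0) ≤ ‖Zt c‖ := by
    rw [Zt_of_ne hc1, norm_mul]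
    have h1 : 1/10 ≤ ‖c - 1‖ := by
      refine le_trans ?_ (Complex.abs_re_le_norm _)
      rw [sub_re, hcre]; norm_num
    have h2 := (hC0b c (by rw [hcre])).2
    calc 1 / (10 * C0) = 1/10 * (1/C0) := by field_simp
      _ ≤ _ := by gcongr
  have hcond : ∀ a ∈ S.image (fun γ : ℝ => (1/2 + γ * I : ℂ)), ‖a - c‖ ≤ 4/5 := by
    intro a ha
    obtain ⟨γ, hγ, rfl⟩ := Finset.mem_image.1 ha
    have : ‖(1/2 + γ * I - c : ℂ)‖^2 = (3/5)^2 + (γ - t)^2 := by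
      rw [Complex.sq_norm, Complex.normSq_apply]; simp [c]; ring
    have h2 : (γ - t)^2 ≤ (1/2)^2 := sq_le_sq' (by linarith [abs_le.1 (hS γ hγ)])
      (abs_le.1 (hS γ hγ)).2
    nlinarith [norm_nonneg (1/2 + γ * I - c : ℂ)]
  have hgr : ∀ z, ‖z - c‖ ≤ 39/20 → ‖Zt z‖ ≤ C * (5 * (1 + |t|))^3 := by
    intro z hz
    have h1 : -(9/10) ≤ z.re := by
      have := (abs_le.1 ((Complex.abs_re_le_norm (z - c)).trans hz)).1
      rw [sub_re, hcre] at this; linarith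
    refine (hCb z h1).trans ?_
    have : ‖z‖ ≤ ‖z - c‖ + ‖c‖ := by simpa using norm_add_le (z - c) c
    gcongr
    linarith [abs_nonneg t]
  have key := zeros_upper Zt_differentiable hc (r := 4/5) (R := 39/20) (by norm_num) (by norm_num)
    hgr _ hcond
  rw [Finset.sum_image (by intro x _ y _ h; simpa using h)] at key
  set n := ∑ γ ∈ S, analyticOrderNatAt Zt (1/2 + γ * I)
  have hn : (∑ γ ∈ S, (mz γ : ℝ)) = n := by simp [n, mz]
  rw [hn]
  have hpos : 0 < 1 + |t| := by positivity
  have key2 : (23/16 : ℝ)^n ≤ A * (1 + |t|)^3 := by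
    calc (23/16 : ℝ)^n = ((39 / 20 - 4 / 5) / (4 / 5)) ^ n := by norm_num
      _ ≤ _ := key
      _ ≤ C * (5 * (1 + |t|))^3 / (1 / (10 * C0)) := by gcongr
      _ = _ := by simp only [A]; field_simp
  have h3 := Real.log_le_log (by positivity) key2
  rw [Real.log_pow, Real.log_mul hA.ne' (by positivity), Real.log_pow] at h3
  have h4 := Real.log_le_rpow_div hpos.le (ε := 1/2) (by norm_num)
  have h5 : 1 ≤ (1 + |t|)^(1/2 : ℝ) := Real.one_le_rpow (by linarith [abs_nonneg t]) (by norm_num)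
  rw [div_mul_eq_mul_div, le_div_iff₀ hL]
  push_cast at h3
  nlinarith [Real.log_nonneg hA1]

lemma summable_int_aux : Summable (fun k : ℤ => (2 + |(k:ℝ)|) ^ (1/2 : ℝ) / (1 + (k:ℝ)^2)) := by
  have h : Summable (fun n : ℕ => (2 + |((n:ℤ):ℝ)|) ^ (1/2 : ℝ) / (1 + ((n:ℤ):ℝ)^2)) := by
    have h0 : Summable (fun n : ℕ => 4 * ((n:ℝ) + 1)^(-(3/2 : ℝ))) := by
      have := (summable_nat_add_iff 1).2 (Real.summable_nat_rpow.2 (show -(3/2:ℝ) < -1 by norm_num))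
      exact (by simpa using this : Summable (fun n : ℕ => ((n:ℝ) + 1)^(-(3/2 : ℝ)))).mul_left 4
    refine Summable.of_nonneg_of_le (fun n => by positivity) (fun n => ?_) h0
    have hn : (0:ℝ) ≤ n := n.cast_nonneg
    simp only [Int.cast_natCast, abs_of_nonneg hn]
    rw [div_le_iff₀ (by positivity)]
    have e1 : ((n:ℝ)+1)^(-(3/2:ℝ)) = ((n:ℝ)+1)^(1/2:ℝ) / ((n:ℝ)+1)^2 := by
      rw [← Real.rpow_natCast, ← Real.rpow_sub (by positivity)]; norm_num
    have e2 : (2 + (n:ℝ))^(1/2:ℝ) ≤ 2 * ((n:ℝ)+1)^(1/2:ℝ) := by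
      calc (2 + (n:ℝ))^(1/2:ℝ) ≤ (4 * ((n:ℝ)+1))^(1/2:ℝ) := by gcongr; linarith
        _ = _ := by
          rw [Real.mul_rpow (by norm_num) (by positivity)]
          congr 1
          rw [show (4:ℝ) = 2^(2:ℝ) by norm_num, ← Real.rpow_mul (by norm_num)]; norm_num
    rw [e1]
    refine e2.trans ?_
    rw [mul_div_assoc', div_mul_eq_mul_div, le_div_iff₀ (by positivity)]
    have : 0 ≤ ((n:ℝ)+1)^(1/2:ℝ) := by positivity
    have h6 : ((n:ℝ)+1)^2 ≤ 2 * (1 + (n:ℝ)^2) := by nlinarith [sq_nonneg ((n:ℝ)-1)]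
    nlinarith [mul_le_mul_of_nonneg_left h6 this]
  refine Summable.of_nat_of_neg h ?_
  refine h.congr fun n => ?_
  simp

lemma zeros_U : ∃ K : ℝ, 0 < K ∧ ∀ S : Finset ℝ, (∑ γ ∈ S, (mz γ : ℝ) / (1/4 + γ^2)) ≤ K := by
  obtain ⟨K, hK, hKb⟩ := window_upper
  set Sg := ∑' k : ℤ, (2 + |(k:ℝ)|) ^ (1/2 : ℝ) / (1 + (k:ℝ)^2)
  have hSg : 0 ≤ Sg := tsum_nonneg fun _ => by positivity
  refine ⟨12 * K * Sg + 1, by positivity, fun S => ?_⟩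
  classical
  have h1 : ∑ γ ∈ S, (mz γ : ℝ) / (1/4 + γ^2) =
      ∑ k ∈ S.image Int.floor, ∑ γ ∈ S with ⌊γ⌋ = k, (mz γ : ℝ) / (1/4 + γ^2) :=
    (Finset.sum_fiberwise_of_maps_to (fun x hx => Finset.mem_image_of_mem _ hx) _).symm
  rw [h1]
  have h2 : ∀ k : ℤ, ∑ γ ∈ S with ⌊γ⌋ = k, (mz γ : ℝ) / (1/4 + γ^2) ≤
      12 * K * ((2 + |(k:ℝ)|) ^ (1/2 : ℝ) / (1 + (k:ℝ)^2)) := by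
    intro k
    have hw : ∀ γ ∈ S.filter (fun γ => ⌊γ⌋ = k), (k:ℝ) ≤ γ ∧ γ < k + 1 := by
      intro γ hγ
      have := (Finset.mem_filter.1 hγ).2
      rw [Int.floor_eq_iff] at this
      exact this
    have h3 := hKb (k + 1/2) (S.filter (fun γ => ⌊γ⌋ = k)) (by
      intro γ hγ
      obtain ⟨ha, hb⟩ := hw γ hγ
      rw [abs_le]; constructor <;> linarith)
    calc ∑ γ ∈ S with ⌊γ⌋ = k, (mz γ : ℝ) / (1/4 + γ^2)
        ≤ ∑ γ ∈ S with ⌊γ⌋ = k, (mz γ : ℝ) * (12 / (1 + (k:ℝ)^2)) := by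
          refine Finset.sum_le_sum fun γ hγ => ?_
          obtain ⟨ha, hb⟩ := hw γ hγ
          rw [div_eq_mul_inv]
          gcongr
          rw [inv_le_comm₀ (by positivity) (by positivity), inv_div, div_le_iff₀ (by norm_num)]
          nlinarith [sq_nonneg (γ - 1), sq_nonneg (γ + 1), sq_nonneg γ, sq_nonneg ((k:ℝ) - 2 * γ), mul_nonneg (sub_nonneg.2 ha) (sub_nonneg.2 hb.le)]
      _ = (∑ γ ∈ S with ⌊γ⌋ = k, (mz γ : ℝ)) * (12 / (1 + (k:ℝ)^2)) := by rw [Finset.sum_mul]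
      _ ≤ (K * (1 + |(k:ℝ) + 1/2|) ^ (1/2:ℝ)) * (12 / (1 + (k:ℝ)^2)) := by gcongr
      _ ≤ (K * (2 + |(k:ℝ)|) ^ (1/2:ℝ)) * (12 / (1 + (k:ℝ)^2)) := by
          gcongr ?_ * _
          gcongr K * ?_ ^ _
          have := abs_add_le (k:ℝ) (1/2)
          rw [abs_of_pos (show (0:ℝ) < 1/2 by norm_num)] at this
          linarith
      _ = _ := by ring
  calc _ ≤ ∑ k ∈ S.image Int.floor, 12 * K * ((2 + |(k:ℝ)|) ^ (1/2 : ℝ) / (1 + (k:ℝ)^2)) :=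
        Finset.sum_le_sum fun k _ => h2 k
    _ = 12 * K * ∑ k ∈ S.image Int.floor, ((2 + |(k:ℝ)|) ^ (1/2 : ℝ) / (1 + (k:ℝ)^2)) := by
        rw [Finset.mul_sum]
    _ ≤ 12 * K * Sg := by
        gcongr
        exact summable_int_aux.sum_le_tsum _ fun _ _ => by positivity
    _ ≤ _ := by linarith

end LW
end

section
namespace LW
open Complex Topology

lemma exists_log_ball {g : ℂ → ℂ} (hg : Differentiable ℂ g) {R : ℝ} (hR : 0 < R)
    (hnz : ∀ z ∈ Metric.ball (0:ℂ) R, g z ≠ 0) :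
    ∃ h : ℂ → ℂ, DifferentiableOn ℂ h (Metric.ball 0 R) ∧ h 0 = 0 ∧
      ∀ z ∈ Metric.ball (0:ℂ) R, g z = g 0 * Complex.exp (h z) := by
  have hd : DifferentiableOn ℂ (fun z => deriv g z / g z) (Metric.ball 0 R) := by
    intro z hz
    refine DifferentiableAt.differentiableWithinAt ?_
    exact ((hg.analyticAt z).deriv.differentiableAt).div (hg z) (hnz z hz)
  obtain ⟨h, h0, hh⟩ := hd.isExactOn_ball.with_val_at 0 0
  refine ⟨h, fun z hz => (hh z hz).differentiableAt.differentiableWithinAt, h0, ?_⟩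
  have hz0 : (0:ℂ) ∈ Metric.ball (0:ℂ) R := Metric.mem_ball_self hR
  intro z hz
  have hder : ∀ w ∈ Metric.ball (0:ℂ) R, HasDerivAt (fun w => g w * Complex.exp (-h w)) 0 w := by
    intro w hw
    have h1 := (hg w).hasDerivAt.mul (hh w hw).neg.cexp
    refine h1.congr_deriv ?_
    have := hnz w hw
    field_simp
    ring
  have hconst := Metric.isOpen_ball.is_const_of_deriv_eq_zero
    (Metric.isPreconnected_ball : IsPreconnected (Metric.ball (0:ℂ) R))
    (f := fun w => g w * Complex.exp (-h w))
    (fun w hw => (hder w hw).differentiableAt.differentiableWithinAt)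
    (fun w hw => (hder w hw).deriv) hz hz0
  simp only [h0, neg_zero, Complex.exp_zero, mul_one] at hconst
  rw [← hconst, mul_assoc, ← Complex.exp_add]; simp

lemma three_circles {h : ℂ → ℂ} {r R R' a b : ℝ} (hr : 0 < r) (hrR : r < R) (hRR : R < R')
    (hd : DifferentiableOn ℂ h (Metric.ball 0 R')) (ha : ∀ z, ‖z‖ = r → ‖h z‖ ≤ a)
    (hb : ∀ z, ‖z‖ = R → ‖h z‖ ≤ b) {z : ℂ} (hz1 : r ≤ ‖z‖) (hz2 : ‖z‖ ≤ R) :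
    ‖h z‖ ≤ a ^ (1 - (Real.log ‖z‖ - Real.log r) / (Real.log R - Real.log r)) *
      b ^ ((Real.log ‖z‖ - Real.log r) / (Real.log R - Real.log r)) := by
  have hz0 : z ≠ 0 := norm_pos_iff.1 (by linarith)
  have hR : 0 < R := by linarith
  have hlog : Real.log r < Real.log R := Real.log_lt_log hr hrR
  have hen : ∀ w : ℂ, w.re ≤ Real.log R → ‖Complex.exp w‖ ≤ R := fun w hw => by
    rw [Complex.norm_exp, ← Real.exp_log hR]; exact Real.exp_le_exp.2 hw
  have hdiff : ∀ w : ℂ, w.re ≤ Real.log R → DifferentiableAt ℂ (fun w => h (Complex.exp w)) w := by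
    intro w hw
    have : Complex.exp w ∈ Metric.ball (0:ℂ) R' := by
      rw [mem_ball_zero_iff]; linarith [hen w hw]
    have h1 := hd.differentiableAt (Metric.isOpen_ball.mem_nhds this)
    exact h1.comp w Complex.differentiable_exp.differentiableAt
  have hcl : closure (HadamardThreeLines.verticalStrip (Real.log r) (Real.log R)) ⊆
      {w | w.re ≤ Real.log R} :=
    closure_minimal (fun w hw => hw.2.le) (isClosed_le continuous_re continuous_const)
  have := HadamardThreeLines.norm_le_interp_of_mem_verticalClosedStrip'
    (f := fun w => h (Complex.exp w)) (z := Complex.log z) (a := a) (b := b) hlog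
    (by
      constructor
      · rw [Complex.log_re]; exact Real.log_le_log hr hz1
      · rw [Complex.log_re]; exact Real.log_le_log (by linarith) hz2)
    ⟨fun w hw => (hdiff w hw.2.le).differentiableWithinAt,
      fun w hw => (hdiff w (hcl hw)).continuousAt.continuousWithinAt⟩
    (by
      have hK : IsCompact (Metric.closedBall (0:ℂ) R) := isCompact_closedBall _ _
      have hc : ContinuousOn h (Metric.closedBall (0:ℂ) R) :=
        hd.continuousOn.mono (Metric.closedBall_subset_ball hRR)
      obtain ⟨C, hC⟩ := hK.exists_bound_of_continuousOn hc
      refine ⟨C, ?_⟩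
      rintro _ ⟨w, hw, rfl⟩
      exact hC _ (by simpa using hen w hw.2))
    (by
      intro w hw
      apply ha
      rw [mem_preimage, mem_singleton_iff] at hw
      rw [Complex.norm_exp, hw, Real.exp_log hr])
    (by
      intro w hw
      apply hb
      rw [mem_preimage, mem_singleton_iff] at hw
      rw [Complex.norm_exp, hw, Real.exp_log hR])
  simpa [Complex.exp_log hz0, Complex.log_re] using this

noncomputable def th : ℝ := (Real.log (5/2) - Real.log (1/4)) / (Real.log (13/5) - Real.log (1/4))

lemma th_pos : 0 < th := by
  have h1 : Real.log (1/4) < Real.log (5/2) := Real.log_lt_log (by norm_num) (by norm_num)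
  have h2 : Real.log (1/4) < Real.log (13/5) := Real.log_lt_log (by norm_num) (by norm_num)
  exact div_pos (by linarith) (by linarith)

lemma th_lt_one : th < 1 := by
  have h1 : Real.log (5/2) < Real.log (13/5) := Real.log_lt_log (by norm_num) (by norm_num)
  have h2 : Real.log (1/4) < Real.log (13/5) := Real.log_lt_log (by norm_num) (by norm_num)
  rw [th, div_lt_one (by linarith)]; linarith

lemma lower_abs {F : ℂ → ℂ} (hF : Differentiable ℂ F) {c : ℂ} (hc : F c ≠ 0) {B K : ℝ}
    (hB1 : 1 ≤ B) (hK1 : 1 ≤ K) (hB : ∀ z, ‖z - c‖ ≤ 14/5 → ‖F z‖ ≤ B * ‖F c‖)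
    (hK : ∀ z, ‖z - c‖ ≤ 1/2 → ‖F z‖ ≤ K * ‖F c‖) (Z : Finset ℂ)
    (hZ : ∀ a, a ∈ Z ↔ (‖a - c‖ ≤ 27/10 ∧ F a = 0)) (hZr : ∀ a ∈ Z, (a - c).re ≤ -(3/2))
    {n : ℕ} (hn : ∑ a ∈ Z, analyticOrderNatAt F a = n) :
    ‖F (c - 5/2)‖ ≤ 6 ^ n * Real.exp ((2 * (Real.log (K * 3^n) + 1)) ^ (1 - th) *
      (52 * (Real.log (B * 30^n) + 1)) ^ th) * ‖F c‖ := by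
  obtain ⟨g, hg, hfg, hgz⟩ := factor hF ⟨c, hc⟩ Z
  set P : ℂ → ℂ := fun z => ∏ a ∈ Z, (z - a) ^ (analyticOrderNatAt F a) with hP
  have hFP : ∀ z, F z = P z * g z := hfg
  have hPub : ∀ (z : ℂ) (M : ℝ), (∀ a ∈ Z, ‖z - a‖ ≤ M) → ‖P z‖ ≤ M ^ n := by
    intro z M h
    rw [hP, norm_prod, ← hn, ← Finset.prod_pow_eq_pow_sum]
    refine Finset.prod_le_prod (fun _ _ => by positivity) fun a ha => ?_
    rw [norm_pow]; gcongr; exact h a ha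
  have hPlb : ∀ (z : ℂ) (M : ℝ), 0 ≤ M → (∀ a ∈ Z, M ≤ ‖z - a‖) → M ^ n ≤ ‖P z‖ := by
    intro z M hM h
    rw [hP, norm_prod, ← hn, ← Finset.prod_pow_eq_pow_sum]
    refine Finset.prod_le_prod (fun _ _ => by positivity) fun a ha => ?_
    rw [norm_pow]; gcongr; exact h a ha
  have hgc : g c ≠ 0 := fun h => hc (by rw [hFP, h, mul_zero])
  have hgc' : 0 < ‖g c‖ := norm_pos_iff.2 hgc
  have hPc : ‖P c‖ ≤ 3^n := hPub c 3 fun a ha => by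
    rw [norm_sub_rev]; linarith [((hZ a).1 ha).1]
  have hsmall : ∀ z, ‖z - c‖ ≤ 1/2 → 1 ≤ ‖P z‖ := by
    intro z hz
    have := hPlb z 1 zero_le_one fun a ha => by
      have h1 := hZr a ha
      have h2 := (abs_le.1 ((Complex.abs_re_le_norm (z - c)).trans hz)).1
      refine le_trans ?_ (Complex.abs_re_le_norm _)
      refine le_trans ?_ (le_abs_self _)
      simp only [sub_re] at *
      linarith
    simpa using this
  -- bound in small ball
  have hs : ∀ z, ‖z - c‖ ≤ 1/2 → ‖g z‖ ≤ K * 3^n * ‖g c‖ := by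
    intro z hz
    calc ‖g z‖ ≤ ‖P z‖ * ‖g z‖ := le_mul_of_one_le_left (norm_nonneg _) (hsmall z hz)
      _ = ‖F z‖ := by rw [hFP, norm_mul]
      _ ≤ K * ‖F c‖ := hK z hz
      _ = K * (‖P c‖ * ‖g c‖) := by rw [hFP, norm_mul]
      _ ≤ K * (3^n * ‖g c‖) := by gcongr
      _ = _ := by ring
  have hl : ∀ z, ‖z - c‖ ≤ 14/5 → ‖g z‖ ≤ B * 30^n * ‖g c‖ := by
    intro z hz
    refine Complex.norm_le_of_forall_mem_frontier_norm_le (U := Metric.ball c (14/5))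
      Metric.isBounded_ball hg.diffContOnCl ?_ (by
        rw [closure_ball _ (by norm_num)]; simpa [dist_eq_norm] using hz)
    intro w hw
    rw [frontier_ball _ (by norm_num), mem_sphere_iff_norm] at hw
    have h1 := hPlb w (1/10) (by norm_num) fun a ha => by
      have := norm_sub_norm_le (w - c) (a - c)
      rw [sub_sub_sub_cancel_right] at this
      linarith [((hZ a).1 ha).1]
    have h2 : (1/10:ℝ)^n * ‖g w‖ ≤ B * 3^n * ‖g c‖ := by
      calc (1/10:ℝ)^n * ‖g w‖ ≤ ‖P w‖ * ‖g w‖ := by gcongr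
        _ = ‖F w‖ := by rw [hFP, norm_mul]
        _ ≤ B * ‖F c‖ := hB w hw.le
        _ = B * (‖P c‖ * ‖g c‖) := by rw [hFP, norm_mul]
        _ ≤ B * (3^n * ‖g c‖) := by gcongr
        _ = _ := by ring
    calc ‖g w‖ = 10^n * ((1/10:ℝ)^n * ‖g w‖) := by
          rw [← mul_assoc, ← mul_pow]; norm_num
      _ ≤ 10^n * (B * 3^n * ‖g c‖) := by gcongr
      _ = _ := by rw [show (30:ℝ) = 10 * 3 by norm_num, mul_pow]; ring
  -- logarithm
  have hnz : ∀ z ∈ Metric.ball (0:ℂ) (27/10), g (c + z) ≠ 0 := by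
    intro z hz h0
    rw [mem_ball_zero_iff] at hz
    by_cases hm : c + z ∈ Z
    · exact hgz _ hm h0
    · exact hm ((hZ _).2 ⟨by simpa using hz.le, by rw [hFP, h0, mul_zero]⟩)
  obtain ⟨h, hhd, hh0, hhe⟩ := exists_log_ball (g := fun z => g (c + z))
    (hg.comp (by fun_prop)) (by norm_num) hnz
  simp only [add_zero] at hhe
  have hre : ∀ (X : ℝ), 1 ≤ X → ∀ z ∈ Metric.ball (0:ℂ) (27/10), ‖g (c+z)‖ ≤ X * ‖g c‖ →
      (h z).re ≤ Real.log X + 1 := by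
    intro X hX z hz hgz
    rw [hhe z hz, norm_mul, Complex.norm_exp, mul_comm] at hgz
    have := (Real.le_log_iff_exp_le (by linarith)).2 (le_of_mul_le_mul_right hgz hgc')
    linarith
  have hX1 : 1 ≤ K * 3^n := by
    have : (1:ℝ) ≤ 3^n := one_le_pow₀ (by norm_num)
    nlinarith
  have hX2 : 1 ≤ B * 30^n := by
    have : (1:ℝ) ≤ 30^n := one_le_pow₀ (by norm_num)
    nlinarith
  have hM1 := Real.log_nonneg hX1
  have hM2 := Real.log_nonneg hX2
  have b1 : ∀ z, ‖z‖ = 1/4 → ‖h z‖ ≤ 2 * (Real.log (K * 3^n) + 1) := by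
    intro z hz
    have := borelCaratheodory_zero (M := Real.log (K * 3^n) + 1) (R := 1/2) (f := h) (z := z)
      (by linarith)
      (hhd.mono (Metric.ball_subset_ball (by norm_num))) (by
        intro w hw
        rw [mem_ball_zero_iff] at hw
        exact hre _ hX1 w (by rw [mem_ball_zero_iff]; linarith)
          (hs _ (by simpa using hw.le))) (by norm_num)
      (by rw [mem_ball_zero_iff, hz]; norm_num) hh0
    rw [hz] at this
    refine this.trans (le_of_eq ?_)
    ring
  have b2 : ∀ z, ‖z‖ = 13/5 → ‖h z‖ ≤ 52 * (Real.log (B * 30^n) + 1) := by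
    intro z hz
    have := borelCaratheodory_zero (M := Real.log (B * 30^n) + 1) (R := 27/10) (f := h) (z := z)
      (by linarith) hhd (by
        intro w hw
        have hw' := hw
        rw [mem_ball_zero_iff] at hw
        exact hre _ hX2 w hw'
          (hl _ (by simp only [add_sub_cancel_left]; linarith))) (by norm_num)
      (by rw [mem_ball_zero_iff, hz]; norm_num) hh0
    rw [hz] at this
    refine this.trans (le_of_eq ?_)
    ring
  have h52 : ‖(-5/2 : ℂ)‖ = 5/2 := by
    rw [norm_div, norm_neg]; simp
  have b3 := three_circles (r := 1/4) (R := 13/5) (R' := 27/10) (by norm_num) (by norm_num)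
    (by norm_num) hhd b1 b2 (z := -5/2) (by rw [h52]; norm_num) (by rw [h52]; norm_num)
  rw [h52] at b3
  change _ ≤ _ ^ (1 - th) * _ ^ th at b3
  have h3 := hhe (-5/2) (by rw [mem_ball_zero_iff, h52]; norm_num)
  have e : c - 5/2 = c + -5/2 := by ring
  have hPe : ‖P (c + -5/2)‖ ≤ 6^n := hPub _ 6 fun a ha => by
    have : c + -5/2 - a = -5/2 - (a - c) := by ring
    rw [this]
    refine (norm_sub_le _ _).trans ?_
    rw [h52]; linarith [((hZ a).1 ha).1]
  rw [e, hFP, h3, norm_mul, norm_mul, Complex.norm_exp]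
  have hc1 : ‖g c‖ ≤ ‖F c‖ := by
    rw [hFP, norm_mul]
    exact le_mul_of_one_le_left (norm_nonneg _) (hsmall c (by simp))
  calc _ ≤ 6^n * (‖F c‖ * Real.exp ‖h (-5/2)‖) := by
        gcongr
        exact Complex.re_le_norm _
    _ ≤ 6^n * (‖F c‖ * Real.exp ((2 * (Real.log (K * 3^n) + 1)) ^ (1 - th) *
      (52 * (Real.log (B * 30^n) + 1)) ^ th)) := by gcongr
    _ = _ := by ring

end LW
end

section
namespace LW
open Complex Topology

lemma norm_Gammaℝ_conj (s : ℂ) : ‖Gammaℝ (starRingEnd ℂ s)‖ = ‖Gammaℝ s‖ := by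
  rw [Gammaℝ_def, Gammaℝ_def, norm_mul, norm_mul]
  congr 1
  · rw [Complex.norm_cpow_eq_rpow_re_of_pos Real.pi_pos,
      Complex.norm_cpow_eq_rpow_re_of_pos Real.pi_pos]
    simp
  · have : (starRingEnd ℂ s) / 2 = starRingEnd ℂ (s / 2) := by
      rw [map_div₀, Complex.conj_ofNat]
    rw [this, Complex.Gamma_conj, Complex.norm_conj]

lemma zeta_left (t : ℝ) (ht : 1 ≤ t) :
    ‖riemannZeta (-1/2 + t * I)‖ = ‖riemannZeta (3/2 - t * I)‖ * (‖(-1/2 + t * I : ℂ)‖ / (2 * π)) := by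
  set s : ℂ := -1/2 + t * I with hs
  have him : s.im = t := by simp [s]
  have hre : s.re = -1/2 := by simp [s]; 
  have hs0 : s ≠ 0 := by intro h; rw [h] at him; simp at him; linarith
  have h1s : (3/2 - t * I : ℂ) = 1 - s := by rw [hs]; ring
  have h1s0 : 1 - s ≠ 0 := by
    intro h; have := congrArg Complex.re h; rw [sub_re, hre] at this; norm_num at this
  have hG : ∀ z : ℂ, z.re = 3/2 → Gammaℝ z ≠ 0 := fun z hz =>
    Gammaℝ_ne_zero_of_re_pos (by rw [hz]; norm_num)
  have hG1 : Gammaℝ (1 - s) ≠ 0 := hG _ (by rw [sub_re, hre]; norm_num)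
  have hconj : 1 - s = starRingEnd ℂ (s + 2) := by
    apply Complex.ext <;> simp [hre, him] <;> norm_num
  have hadd := Gammaℝ_add_two hs0
  have hGs : Gammaℝ s ≠ 0 := by
    intro h
    rw [h] at hadd
    exact hG (s+2) (by simp [hre]; norm_num) (by rw [hadd]; simp)
  rw [h1s, riemannZeta_def_of_ne_zero hs0, riemannZeta_def_of_ne_zero h1s0,
    completedRiemannZeta_one_sub, norm_div, norm_div]
  have e : ‖Gammaℝ (1 - s)‖ = ‖Gammaℝ s‖ * ‖s‖ / 2 / π := by
    rw [hconj, norm_Gammaℝ_conj, hadd]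
    simp [abs_of_pos Real.pi_pos]
  rw [e]
  have h1 : ‖Gammaℝ s‖ ≠ 0 := norm_ne_zero_iff.2 hGs
  have h2 : ‖s‖ ≠ 0 := norm_ne_zero_iff.2 hs0
  have := Real.pi_pos.ne'
  field_simp

lemma zero_on_line (hRH : ∀ s : ℂ, 1/2 < s.re → Zt s ≠ 0) {s : ℂ} (hs : Zt s = 0)
    (him : s.im ≠ 0) : s.re = 1/2 := by
  have hne : ∀ r : ℝ, s ≠ r := by
    intro r h; rw [h] at him; simp at him
  have h1 : s ≠ 1 := by simpa using hne 1
  have hz : riemannZeta s = 0 := by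
    rw [Zt_of_ne h1] at hs
    exact (mul_eq_zero.1 hs).resolve_left (sub_ne_zero.2 h1)
  have h2 := riemannZeta_one_sub (s := s) (fun n => by simpa using hne (-n)) h1
  rw [hz, mul_zero] at h2
  have h3 : 1 - s ≠ 1 := by
    intro h; apply hne 0; simpa using h
  have h4 : Zt (1 - s) = 0 := by rw [Zt_of_ne h3, h2, mul_zero]
  by_contra hc
  rcases lt_or_gt_of_ne hc with h | h
  · exact hRH (1 - s) (by simp; linarith) h4
  · exact hRH s h hs

lemma rpow_absurd (a b c d θ : ℝ) (h0 : 0 < θ) (h1 : θ < 1) (ha : 0 ≤ a) (hc : 0 ≤ c)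
    (hd : 0 ≤ d) :
    ∀ᶠ t : ℝ in atTop, b * Real.exp (a * (c + d * Real.log t) ^ θ) < t := by
  -- with L = log t → ∞
  have hL : ∀ᶠ L : ℝ in atTop, b * Real.exp (a * (c + d * L) ^ θ) < Real.exp L := by
    have hD : 0 < (c + d + 1) := by positivity
    have hlin : Tendsto (fun L : ℝ => ((c + d + 1) * L)) atTop atTop :=
      tendsto_id.const_mul_atTop hD
    have h3 := ((tendsto_rpow_neg_atTop (show 0 < 1 - θ by linarith)).comp hlin).eventually
      (eventually_le_nhds (show 0 < 1 / (2 * (a + 1) * (c + d + 1)) by positivity))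
    filter_upwards [h3, eventually_ge_atTop 1, eventually_gt_atTop (2 * Real.log (|b| + 1))]
      with L h4 hL1 hLb
    simp only [Function.comp] at h4
    have hDL : 0 < (c + d + 1) * L := by positivity
    have h6 : ((c + d + 1) * L)^θ ≤ 1 / (2 * (a + 1) * (c + d + 1)) * ((c + d + 1) * L) := by
      have e : ((c + d + 1) * L)^θ = ((c + d + 1) * L)^(-(1-θ)) * ((c + d + 1) * L) := by
        rw [← Real.rpow_add_one hDL.ne']; congr 1; ring
      rw [e]; gcongr
    have h5 : a * (c + d * L) ^ θ ≤ L / 2 := by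
      have : (c + d * L)^θ ≤ ((c + d + 1) * L)^θ := by
        gcongr
        nlinarith
      calc a * (c + d * L) ^ θ ≤ (a+1) * (1 / (2 * (a + 1) * (c + d + 1)) * ((c + d + 1) * L)) := by
            have h6 := this.trans h6
            have : 0 ≤ (c + d * L) ^ θ := by positivity
            gcongr
            linarith
        _ = L / 2 := by field_simp
    calc b * Real.exp (a * (c + d * L) ^ θ) ≤ |b| * Real.exp (L/2) := by
          gcongr
          exact le_abs_self b
      _ < (|b| + 1) * Real.exp (L/2) := by gcongr; linarith
      _ = Real.exp (Real.log (|b|+1)) * Real.exp (L/2) := by rw [Real.exp_log (by positivity)]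
      _ ≤ Real.exp L := by
          rw [← Real.exp_add]; apply Real.exp_le_exp.2; linarith
  filter_upwards [Real.tendsto_log_atTop.eventually hL, eventually_gt_atTop 0] with t ht h0
  rwa [Real.exp_log h0] at ht

lemma zeros_L_aux (hRH : ∀ s : ℂ, 1/2 < s.re → Zt s ≠ 0) (n : ℕ) :
    ∀ᶠ t : ℝ in atTop, ∀ Z : Finset ℂ,
      (∀ a, a ∈ Z ↔ (‖a - (2 + t * I)‖ ≤ 27/10 ∧ Zt a = 0)) →
      ∑ a ∈ Z, analyticOrderNatAt Zt a ≠ n := by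
  obtain ⟨C, hC, hCb⟩ := Zt_growth
  obtain ⟨C0, hC0, hC0b⟩ := zeta_bounds
  have hCC : 1 ≤ 8 * C * C0 * 30^n := by
    have : (1:ℝ) ≤ 30^n := one_le_pow₀ (by norm_num)
    have h2 : 1 ≤ C * C0 := one_le_mul_of_one_le_of_one_le hC hC0
    nlinarith
  have hlogCC := Real.log_nonneg hCC
  have hKK : 1 ≤ 2 * C0^2 * 3^n := by
    have : (1:ℝ) ≤ 3^n := one_le_pow₀ (by norm_num)
    have h2 : 1 ≤ C0^2 := one_le_pow₀ hC0
    nlinarith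
  have hlogKK := Real.log_nonneg hKK
  filter_upwards [rpow_absurd ((2 * (Real.log (2 * C0^2 * 3^n) + 1)) ^ (1 - th))
    (4 * π * C0^2 * 6^n) (52 * (Real.log (8 * C * C0 * 30^n) + 1)) 104 th th_pos th_lt_one
    (by positivity) (by positivity) (by norm_num), eventually_ge_atTop 7] with t habs ht Z hZ hn
  set c : ℂ := 2 + t * I with hc
  have hcre : c.re = 2 := by simp [c]
  have hcim : c.im = t := by simp [c]
  have hc1 : c ≠ 1 := by intro h; rw [h] at hcre; norm_num at hcre
  have hct : ‖c‖ ≤ 2 + t := by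
    refine (norm_add_le _ _).trans ?_
    simp [abs_of_nonneg (show 0 ≤ t by linarith)]
  have hc1t : t ≤ ‖c - 1‖ := by
    refine le_trans ?_ (Complex.abs_im_le_norm _)
    simp [hcim, le_abs_self]
  have hc1u : ‖c - 1‖ ≤ 2 * t := by
    have : c - 1 = 1 + t * I := by rw [hc]; ring
    rw [this]
    refine (norm_add_le _ _).trans ?_
    simp [abs_of_nonneg (show 0 ≤ t by linarith)]; linarith
  have hFc : ‖Zt c‖ = ‖c - 1‖ * ‖riemannZeta c‖ := by rw [Zt_of_ne hc1, norm_mul]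
  have hFcl : ‖c - 1‖ ≤ C0 * ‖Zt c‖ := by
    have h := (hC0b c (by rw [hcre]; norm_num)).2
    rw [div_le_iff₀ (by linarith)] at h
    rw [hFc]
    nlinarith [norm_nonneg (c - 1)]
  have hFcu : ‖Zt c‖ ≤ 2 * t * C0 := by
    rw [hFc]
    have h := (hC0b c (by rw [hcre]; norm_num)).1
    gcongr
  have hc0 : Zt c ≠ 0 := Zt_ne_zero_of_one_le (by rw [hcre]; norm_num)
  have ht2 : (1:ℝ) ≤ t^2 := one_le_pow₀ (by linarith)
  have main := lower_abs Zt_differentiable hc0 (B := 8 * C * C0 * t^2) (K := 2 * C0^2)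
    (by
      have h2 : 1 ≤ C * C0 := one_le_mul_of_one_le_of_one_le hC hC0
      nlinarith [one_le_mul_of_one_le_of_one_le h2 ht2])
    (by
      have h2 : 1 ≤ C0^2 := one_le_pow₀ hC0
      linarith)
    (by
      intro z hz
      have h1 : -(9/10) ≤ z.re := by
        have := (abs_le.1 ((Complex.abs_re_le_norm (z - c)).trans hz)).1
        rw [sub_re, hcre] at this; linarith
      have : ‖z‖ ≤ ‖z - c‖ + ‖c‖ := by simpa using norm_add_le (z - c) c
      calc ‖Zt z‖ ≤ C * (1 + ‖z‖)^3 := hCb z h1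
        _ ≤ C * (2 * t)^3 := by gcongr; linarith
        _ = 8 * C * t^2 * t := by ring
        _ ≤ 8 * C * t^2 * (C0 * ‖Zt c‖) := by gcongr; linarith
        _ = _ := by ring)
    (by
      intro z hz
      have hzre : 3/2 ≤ z.re := by
        have := (abs_le.1 ((Complex.abs_re_le_norm (z - c)).trans hz)).1
        rw [sub_re, hcre] at this; linarith
      have hz1 : z ≠ 1 := by intro h; rw [h] at hzre; norm_num at hzre
      have : ‖z - 1‖ ≤ ‖z - c‖ + ‖c - 1‖ := by simpa using norm_add_le (z - c) (c - 1)
      rw [Zt_of_ne hz1, norm_mul]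
      have h := (hC0b z (by linarith)).1
      calc ‖z - 1‖ * ‖riemannZeta z‖ ≤ (2 * ‖c - 1‖) * C0 := by gcongr; linarith
        _ ≤ (2 * (C0 * ‖Zt c‖)) * C0 := by gcongr
        _ = _ := by ring)
    Z hZ
    (by
      intro a ha
      obtain ⟨h1, h2⟩ := (hZ a).1 ha
      have him : a.im ≠ 0 := by
        have := (abs_le.1 ((Complex.abs_im_le_norm (a - c)).trans h1)).1
        rw [sub_im, hcim] at this
        intro h; linarith
      rw [sub_re, zero_on_line hRH h2 him, hcre]; norm_num)
    hn
  have e1 : c - 5/2 = -1/2 + t * I := by rw [hc]; ring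
  have e2 : (-1/2 + t * I : ℂ) ≠ 1 := by
    intro h; have := congrArg Complex.im h; simp at this; linarith
  have hlow : t * ((1/C0) * (t / (2 * π))) ≤ ‖Zt (c - 5/2)‖ := by
    rw [e1, Zt_of_ne e2, norm_mul, zeta_left t (by linarith)]
    have h := (hC0b (3/2 - t * I) (by simp; norm_num)).2
    have h1 : t ≤ ‖(-1/2 + t * I - 1 : ℂ)‖ := by
      refine le_trans ?_ (Complex.abs_im_le_norm _)
      simp [le_abs_self]
    have h2 : t ≤ ‖(-1/2 + t * I : ℂ)‖ := by
      refine le_trans ?_ (Complex.abs_im_le_norm _)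
      simp [le_abs_self]
    have := Real.pi_pos
    gcongr
  have elog : Real.log (8 * C * C0 * t^2 * 30^n) = Real.log (8 * C * C0 * 30^n) + 2 * Real.log t := by
    rw [show 8 * C * C0 * t^2 * 30^n = (8 * C * C0 * 30^n) * t^2 by ring,
      Real.log_mul (by positivity) (by positivity), Real.log_pow]; push_cast; ring
  rw [elog, show 52 * (Real.log (8 * C * C0 * 30^n) + 2 * Real.log t + 1)
    = 52 * (Real.log (8 * C * C0 * 30^n) + 1) + 104 * Real.log t by ring] at main
  set E := Real.exp ((2 * (Real.log (2 * C0^2 * 3^n) + 1)) ^ (1 - th) *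
    (52 * (Real.log (8 * C * C0 * 30^n) + 1) + 104 * Real.log t) ^ th)
  have hE : 0 < E := Real.exp_pos _
  have h5 : t * ((1/C0) * (t / (2 * π))) ≤ 6^n * E * (2 * t * C0) :=
    (hlow.trans main).trans (by gcongr)
  have hpi := Real.pi_pos
  have h6 : t ≤ 4 * π * C0^2 * 6^n * E := by
    have h7 : t * ((1/C0) * (t / (2 * π))) = t * (t / (2 * π * C0)) := by field_simp
    have h8 : 6^n * E * (2 * t * C0) = t * (6^n * E * 2 * C0) := by ring
    rw [h7, h8] at h5
    have h9 := le_of_mul_le_mul_left h5 (by linarith)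
    rw [div_le_iff₀ (by positivity)] at h9
    linarith
  linarith

/-- lower bound for number of zeros -/
lemma zeros_L (hRH : ∀ s : ℂ, 1/2 < s.re → Zt s ≠ 0) (M : ℕ) :
    ∀ᶠ t : ℝ in atTop, ∃ S : Finset ℝ, (∀ γ ∈ S, |γ - t| ≤ 3) ∧ M ≤ ∑ γ ∈ S, mz γ := by
  have h : ∀ᶠ t : ℝ in atTop, ∀ n ∈ Finset.range M, ∀ Z : Finset ℂ,
      (∀ a, a ∈ Z ↔ (‖a - (2 + t * I)‖ ≤ 27/10 ∧ Zt a = 0)) →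
      ∑ a ∈ Z, analyticOrderNatAt Zt a ≠ n :=
    (Finset.eventually_all _).2 fun n _ => zeros_L_aux hRH n
  filter_upwards [h, eventually_ge_atTop 7] with t ht h7
  have hfin := zeros_finite Zt_differentiable Zt_nonvanish
    (isCompact_closedBall (2 + t * I : ℂ) (27/10))
  have hmem : ∀ a, a ∈ hfin.toFinset ↔ (‖a - (2 + t * I)‖ ≤ 27/10 ∧ Zt a = 0) := by
    intro a; rw [Set.Finite.mem_toFinset]; simp [dist_eq_norm]
  classical
  refine ⟨hfin.toFinset.image Complex.im, ?_, ?_⟩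
  · intro γ hγ
    obtain ⟨a, ha, rfl⟩ := Finset.mem_image.1 hγ
    have h1 := ((hmem a).1 ha).1
    have := (Complex.abs_im_le_norm _).trans h1
    simp only [sub_im, add_im, mul_im, ofReal_re, I_im, ofReal_im, I_re, mul_one, mul_zero, add_zero, im_ofNat, zero_add] at this
    linarith
  · have hline : ∀ a ∈ hfin.toFinset, a = 1/2 + (a.im : ℂ) * I := by
      intro a ha
      obtain ⟨h1, h2⟩ := (hmem a).1 ha
      have him : a.im ≠ 0 := by
        have := (abs_le.1 ((Complex.abs_im_le_norm _).trans h1)).1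
        simp only [sub_im, add_im, mul_im, ofReal_re, I_im, ofReal_im, I_re, mul_one, mul_zero, add_zero, im_ofNat, zero_add] at this
        intro h; linarith
      have := zero_on_line hRH h2 him
      apply Complex.ext <;> simp [this]
    rw [Finset.sum_image (by
      intro a ha b hb hab
      rw [hline a ha, hline b hb, hab])]
    by_contra hlt
    push Not at hlt
    refine ht _ (Finset.mem_range.2 hlt) hfin.toFinset hmem ?_
    refine Finset.sum_congr rfl fun a ha => ?_
    rw [mz, ← hline a ha]

end LW
end

section
namespace LW
open Complex Topology

lemma growth_aux (b : ℕ → ℕ) (k : ℕ) (hb0 : ∀ n, 1 ≤ b n) (hb : ∀ n, b n ≤ (2 * n + 1) ^ k)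
    {ε : ℝ} (hε : 0 < ε) : ∃ n, (1 - ε) * (b (n+1) : ℝ) ≤ b n := by
  by_contra hcon
  push Not at hcon
  have hε1 : 0 < 1 - ε := by
    by_contra h
    have := hcon 0
    have h1 : (0:ℝ) ≤ b 1 := by positivity
    have h2 : (1:ℝ) ≤ b 0 := by exact_mod_cast hb0 0
    simp only [zero_add] at this
    nlinarith
  have h1 : ∀ n : ℕ, (1:ℝ) ≤ (1 - ε)^n * b n := by
    intro n
    induction n with
    | zero => simpa using (by exact_mod_cast hb0 0 : (1:ℝ) ≤ b 0)
    | succ n ih =>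
      calc (1:ℝ) ≤ (1-ε)^n * b n := ih
        _ ≤ (1-ε)^n * ((1-ε) * b (n+1)) := by gcongr; exact (hcon n).le
        _ = _ := by ring
  have hlim := tendsto_pow_const_mul_const_pow_of_abs_lt_one k
    (show |1 - ε| < 1 by rw [abs_of_pos hε1]; linarith)
  have hlim2 := hlim.const_mul ((3:ℝ)^k)
  rw [mul_zero] at hlim2
  obtain ⟨n, hn, hn1⟩ := ((hlim2.eventually (eventually_lt_nhds zero_lt_one)).and
    (eventually_ge_atTop 1)).exists
  have h2 : (b n : ℝ) ≤ 3^k * n^k := by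
    calc (b n : ℝ) ≤ ((2 * n + 1 : ℕ) : ℝ)^k := by exact_mod_cast hb n
      _ ≤ (3 * n)^k := by
        gcongr; push_cast
        have : (1:ℝ) ≤ n := by exact_mod_cast hn1
        linarith
      _ = _ := by rw [mul_pow]
  have h3 := h1 n
  have : (1-ε)^n * (b n:ℝ) ≤ (1-ε)^n * (3^k * n^k) := by gcongr
  nlinarith

lemma folner (Φ : ℝ → ℂ) (S : Finset ℝ) (hS : ∀ ν, ν ∉ S → Φ ν = 0)
    (hpos : ∀ B : Finset ℝ, 0 ≤ (∑ x ∈ B, ∑ y ∈ B, Φ (x - y)).re) :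
    0 ≤ (∑ ν ∈ S, Φ ν).re := by
  classical
  let B : ℕ → Finset ℝ := fun n =>
    (Fintype.piFinset (fun _ : S => Finset.Icc (-(n:ℤ)) n)).image
      (fun k => ∑ s : S, (k s : ℝ) * (s : ℝ))
  have hB0 : ∀ n, 1 ≤ (B n).card := by
    intro n
    refine Finset.card_pos.2 ⟨0, Finset.mem_image.2 ⟨fun _ => 0, ?_, by simp⟩⟩
    simp
  have hBc : ∀ n, (B n).card ≤ (2 * n + 1) ^ S.card := by
    intro n
    refine Finset.card_image_le.trans ?_
    rw [Fintype.card_piFinset]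
    simp only [Int.card_Icc, Finset.prod_const, Finset.card_univ, Fintype.card_coe]
    apply le_of_eq
    congr 1
    omega
  have hsub : ∀ n, B n ⊆ B (n+1) := by
    intro n x hx
    obtain ⟨k, hk, rfl⟩ := Finset.mem_image.1 hx
    refine Finset.mem_image.2 ⟨k, ?_, rfl⟩
    rw [Fintype.mem_piFinset] at hk ⊢
    intro s
    have := Finset.mem_Icc.1 (hk s)
    rw [Finset.mem_Icc]; push_cast; omega
  have hadd : ∀ n, ∀ x ∈ B n, ∀ ν ∈ S, x + ν ∈ B (n+1) := by
    intro n x hx ν hν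
    obtain ⟨k, hk, rfl⟩ := Finset.mem_image.1 hx
    refine Finset.mem_image.2 ⟨k + Pi.single ⟨ν, hν⟩ 1, ?_, ?_⟩
    · rw [Fintype.mem_piFinset] at hk ⊢
      intro s
      have := Finset.mem_Icc.1 (hk s)
      rw [Finset.mem_Icc]; push_cast
      simp only [Pi.add_apply, Pi.single_apply]
      split_ifs <;> omega
    · simp only [Pi.add_apply, Int.cast_add, add_mul, Finset.sum_add_distrib]
      congr 1
      rw [Finset.sum_eq_single ⟨ν, hν⟩]
      · simp
      · intro b _ hb; simp [hb]
      · simp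
  set A := ∑ ν ∈ S, ‖Φ ν‖
  have hA : 0 ≤ A := Finset.sum_nonneg fun _ _ => norm_nonneg _
  by_contra hneg
  push Not at hneg
  set η := -(∑ ν ∈ S, Φ ν).re
  have hη : 0 < η := by simp only [η]; linarith
  obtain ⟨n, hn⟩ := growth_aux (fun n => (B n).card) S.card hB0 hBc
    (ε := η / (2 * (A + 1))) (by positivity)
  set b0 := ((B n).card : ℝ)
  set b1 := ((B (n+1)).card : ℝ)
  have hb1 : 1 ≤ b1 := Nat.one_le_cast.2 (hB0 (n+1))
  let c : ℝ → ℕ := fun ν => ((B (n+1)).filter (fun y => y + ν ∈ B (n+1))).card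
  have hcu : ∀ ν, (c ν : ℝ) ≤ b1 := fun ν => Nat.cast_le.2 (Finset.card_filter_le _ _)
  have hcl : ∀ ν ∈ S, b0 ≤ c ν := fun ν hν => by
    have : (B n).card ≤ c ν := Finset.card_le_card fun x hx =>
      Finset.mem_filter.2 ⟨hsub n hx, hadd n x hx ν hν⟩
    exact Nat.cast_le.2 this
  have hsum : ∑ x ∈ B (n+1), ∑ y ∈ B (n+1), Φ (x - y) = ∑ ν ∈ S, (c ν : ℂ) * Φ ν := by
    rw [Finset.sum_comm]
    have h1 : ∀ y ∈ B (n+1), ∑ x ∈ B (n+1), Φ (x - y) =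
        ∑ ν ∈ S, if y + ν ∈ B (n+1) then Φ ν else 0 := by
      intro y _
      rw [← Finset.sum_filter]
      have h2 : ∑ x ∈ B (n+1), Φ (x - y) = ∑ x ∈ (B (n+1)).filter (fun x => x - y ∈ S), Φ (x - y) := by
        rw [Finset.sum_filter_of_ne]
        intro x _ hx
        by_contra h
        exact hx (hS _ h)
      rw [h2]
      refine Finset.sum_bij (fun x _ => x - y) ?_ ?_ ?_ ?_
      · intro x hx
        rw [Finset.mem_filter] at hx ⊢
        exact ⟨hx.2, by simpa using hx.1⟩
      · intro x _ x' _ h; linarith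
      · intro ν hν
        rw [Finset.mem_filter] at hν
        exact ⟨y + ν, Finset.mem_filter.2 ⟨hν.2, by simpa using hν.1⟩, by ring⟩
      · intro x _; rfl
    rw [Finset.sum_congr rfl h1, Finset.sum_comm]
    refine Finset.sum_congr rfl fun ν _ => ?_
    rw [← Finset.sum_filter, Finset.sum_const, nsmul_eq_mul]
  have hp := hpos (B (n+1))
  rw [hsum] at hp
  have e : ∑ ν ∈ S, (c ν : ℂ) * Φ ν = (b1 : ℂ) * ∑ ν ∈ S, Φ ν - ∑ ν ∈ S, ((b1 - c ν : ℝ) : ℂ) * Φ ν := by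
    rw [Finset.mul_sum, ← Finset.sum_sub_distrib]
    refine Finset.sum_congr rfl fun ν _ => ?_
    push_cast; ring
  have hbd : ‖∑ ν ∈ S, ((b1 - c ν : ℝ) : ℂ) * Φ ν‖ ≤ (b1 - b0) * A := by
    rw [Finset.mul_sum]
    refine norm_sum_le_of_le _ fun ν hν => ?_
    rw [norm_mul, Complex.norm_real, Real.norm_of_nonneg (by linarith [hcu ν])]
    gcongr
    exact hcl ν hν
  rw [e, sub_re, Complex.re_ofReal_mul] at hp
  have h5 := (abs_le.1 ((Complex.abs_re_le_norm _).trans hbd)).1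
  have h6 : b1 - b0 ≤ η / (2 * (A+1)) * b1 := by linarith
  have h7 : (b1 - b0) * A ≤ η / (2 * (A+1)) * b1 * A := by gcongr
  have h8 : η / (2 * (A+1)) * b1 * A ≤ η * b1 / 2 := by
    have : η / (2 * (A+1)) * b1 * A = (η * b1 / 2) * (A / (A+1)) := by field_simp
    rw [this]
    refine mul_le_of_le_one_right (by positivity) ?_
    rw [div_le_one (by positivity)]; linarith
  have h9 : b1 * (∑ ν ∈ S, Φ ν).re = - (η * b1) := by simp only [η]; ring
  have : 0 < η * b1 := by positivity
  linarith

open MeasureTheory in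
lemma fejer_pd (r : ℝ → ℂ)
    (hpd : ∀ (B : Finset ℝ) (a : ℝ → ℂ),
      0 ≤ (∑ x ∈ B, ∑ y ∈ B, a x * starRingEnd ℂ (a y) * r (x - y)).re)
    (T δ : ℝ) (hT : 0 < T) (B : Finset ℝ) :
    0 ≤ (∑ x ∈ B, ∑ y ∈ B, r (x - y) * ((max 0 (1 - |x - y| / T) : ℝ) : ℂ) *
      Complex.exp (-((x - y : ℝ) * δ * I))).re := by
  have hintg : ∀ x y : ℝ, ∫ u : ℝ, (Icc x (x + T)).indicator (1 : ℝ → ℝ) u *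
      (Icc y (y + T)).indicator (1 : ℝ → ℝ) u = T * max 0 (1 - |x - y| / T) := by
    intro x y
    have : (fun u : ℝ => (Icc x (x + T)).indicator (1 : ℝ → ℝ) u *
      (Icc y (y + T)).indicator (1 : ℝ → ℝ) u) = (Icc (max x y) (min x y + T)).indicator 1 := by
      ext u
      rw [← Set.inter_indicator_mul]
      have : Icc x (x+T) ∩ Icc y (y+T) = Icc (max x y) (min x y + T) := by
        rw [Icc_inter_Icc, min_add_add_right]
      rw [this]; simp [Set.indicator]
    rw [this, integral_indicator_one measurableSet_Icc, Measure.real, Real.volume_Icc,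
      ENNReal.toReal_ofReal', mul_max_of_nonneg _ _ hT.le, mul_zero, max_comm, mul_sub,
      mul_div_cancel₀ _ hT.ne', mul_one, ← max_sub_min_eq_abs]
    congr 1; rw [max_comm y x, min_comm y x]; ring
  have hii : ∀ x y : ℝ, Integrable (fun u : ℝ => (Icc x (x + T)).indicator (1 : ℝ → ℝ) u *
      (Icc y (y + T)).indicator (1 : ℝ → ℝ) u) := by
    intro x y
    have h1 : Integrable ((Icc x (x+T)).indicator (1 : ℝ → ℝ)) :=
      (integrable_indicator_iff measurableSet_Icc).2 (by
        simp only [Pi.one_def]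
        exact integrableOn_const (by simp [Real.volume_Icc]) )
    refine h1.mul_bdd (c := 1) ?_ ?_
    · exact (measurable_one.indicator measurableSet_Icc).aestronglyMeasurable
    · refine ae_of_all _ fun u => ?_
      by_cases h : u ∈ Icc y (y+T) <;> simp [h]
  have key : ∀ u : ℝ, 0 ≤ ∑ x ∈ B, ∑ y ∈ B, ((Icc x (x + T)).indicator (1 : ℝ → ℝ) u *
      (Icc y (y + T)).indicator (1 : ℝ → ℝ) u) *
      (r (x - y) * Complex.exp (-((x - y : ℝ) * δ * I))).re := by
    intro u
    have := hpd B (fun x => (((Icc x (x + T)).indicator (1 : ℝ → ℝ) u : ℝ) : ℂ) *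
      Complex.exp (-(x * δ * I)))
    simp only [Complex.re_sum] at this
    refine this.trans (le_of_eq ?_)
    refine Finset.sum_congr rfl fun x _ => Finset.sum_congr rfl fun y _ => ?_
    rw [← Complex.re_ofReal_mul]
    congr 1
    rw [map_mul, Complex.conj_ofReal, ← Complex.exp_conj]
    have e : Complex.exp (-((x - y : ℝ) * δ * I)) = Complex.exp (-(x * δ * I)) *
        Complex.exp (starRingEnd ℂ (-(y * δ * I))) := by
      rw [← Complex.exp_add]; congr 1; simp; ring
    rw [e]; push_cast; ring
  have h := integral_nonneg (μ := volume) (f := fun u : ℝ => ∑ x ∈ B, ∑ y ∈ B,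
      ((Icc x (x + T)).indicator (1 : ℝ → ℝ) u * (Icc y (y + T)).indicator (1 : ℝ → ℝ) u) *
      (r (x - y) * Complex.exp (-((x - y : ℝ) * δ * I))).re) key
  rw [integral_finsetSum _ fun x _ => integrable_finsetSum _ fun y _ => (hii x y).mul_const _] at h
  simp_rw [integral_finsetSum _ fun y _ => (hii _ y).mul_const _, integral_mul_const, hintg] at h
  have h2 : 0 ≤ T * (∑ x ∈ B, ∑ y ∈ B, r (x - y) * ((max 0 (1 - |x - y| / T) : ℝ) : ℂ) *
      Complex.exp (-((x - y : ℝ) * δ * I))).re := by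
    refine h.trans (le_of_eq ?_)
    simp only [Complex.re_sum, Finset.mul_sum]
    refine Finset.sum_congr rfl fun x _ => Finset.sum_congr rfl fun y _ => ?_
    rw [mul_assoc, ← Complex.re_ofReal_mul]
    congr 2; ring
  exact nonneg_of_mul_nonneg_right h2 hT

end LW
end

section
namespace LW
open Complex Topology

/-- the almost periodic coefficients -/
noncomputable def rr (l : ℝ) : ℂ := ((mz l : ℝ) + (if l = 0 then 1/2 else 0) : ℝ) / (1/2 + l * I)

lemma count_upper (hpd : ∀ (B : Finset ℝ) (a : ℝ → ℂ),
      0 ≤ (∑ x ∈ B, ∑ y ∈ B, a x * starRingEnd ℂ (a y) * rr (x - y)).re) :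
    ∃ K : ℝ, 0 < K ∧ ∀ T : ℝ, 0 < T → ∀ S : Finset ℝ, (∀ γ ∈ S, 1 ≤ γ ∧ γ ≤ T) →
      (∑ γ ∈ S, (mz γ : ℝ)) ≤ K * T := by
  obtain ⟨K, hK, hKb⟩ := zeros_U
  refine ⟨16 * (K/2 + 1), by positivity, fun T0 hT0 S hS => ?_⟩
  classical
  set T := 2 * T0 with hT_def
  have hT : 0 < T := by positivity
  -- the finite support set
  have hfin : {l : ℝ | |l| ≤ T ∧ mz l ≠ 0}.Finite := by
    have h1 := zeros_finite Zt_differentiable Zt_nonvanish (isCompact_closedBall (1/2 : ℂ) T)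
    have hinj : Function.Injective (fun l : ℝ => (1/2 + l * I : ℂ)) := by
      intro a b h; simpa using h
    refine (h1.preimage (hinj.injOn)).subset ?_
    rintro l ⟨h2, h3⟩
    refine ⟨?_, apply_eq_zero_of_analyticOrderNatAt_ne_zero h3⟩
    simp [dist_eq_norm, h2]
  set R : Finset ℝ := insert 0 (hfin.toFinset ∪ S) with hR
  have hf := folner (fun l => rr l * ((max 0 (1 - |l| / T) : ℝ) : ℂ) *
      Complex.exp (-(l * (1/T : ℝ) * I))) R (by
        intro l hl
        simp only [hR, Finset.mem_insert, Finset.mem_union, not_or, Set.Finite.mem_toFinset] at hl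
        obtain ⟨h0, h1, h2⟩ := hl
        by_cases hlT : |l| ≤ T
        · have : mz l = 0 := by
            by_contra h; exact h1 ⟨hlT, h⟩
          simp [rr, this, h0]
        · have : max 0 (1 - |l| / T) = 0 := by
            rw [max_eq_left]
            rw [sub_nonpos, le_div_iff₀ hT]; linarith
          simp [this])
    (fun B => by simpa using fejer_pd rr hpd T (1/T) hT B)
  rw [Complex.re_sum] at hf
  -- termwise estimate
  have hterm : ∀ l : ℝ, (rr l * ((max 0 (1 - |l| / T) : ℝ) : ℂ) *
      Complex.exp (-(l * (1/T : ℝ) * I))).re ≤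
      (1/2) * ((mz l : ℝ) / (1/4 + l^2)) + (if l = 0 then 1 else 0)
        - (if l ∈ S then (mz l : ℝ) / (8 * T) else 0) := by
    intro l
    set m : ℝ := (mz l : ℝ) + (if l = 0 then 1/2 else 0) with hm
    set w := max 0 (1 - |l| / T) with hw
    have hm0 : (0:ℝ) ≤ mz l := by positivity
    have hmm : 0 ≤ m := by simp only [hm]; split_ifs <;> linarith
    have hw0 : 0 ≤ w := le_max_left _ _
    have hw1 : w ≤ 1 := max_le zero_le_one (by linarith [show 0 ≤ |l|/T by positivity])
    have hq : 0 < 1/4 + l^2 := by positivity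
    have hre : (rr l * (w : ℂ) * Complex.exp (-(l * (1/T : ℝ) * I))).re =
        m * w * (1/2 * Real.cos (l/T) - l * Real.sin (l/T)) / (1/4 + l^2) := by
      have e1 : (1 / (1/2 + l * I) : ℂ) = ((1/(1/4 + l^2) : ℝ) : ℂ) * (1/2 - l * I) := by
        have h1 : (1/2 + l * I : ℂ) ≠ 0 := by
          intro h; have := congrArg Complex.re h; simp at this
        have h2 : ((1/4 + l^2 : ℝ) : ℂ) = (1/2 + l * I) * (1/2 - l * I) := by
          push_cast
          ring_nf; rw [Complex.I_sq]; ring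
        have h3 : ((1/4 + l^2 : ℝ) : ℂ) ≠ 0 := by exact_mod_cast hq.ne'
        rw [ofReal_div, ofReal_one, div_mul_eq_mul_div, div_eq_div_iff h1 h3, h2]; ring
      have e2 : Complex.exp (-(l * (1/T : ℝ) * I)) =
          (Real.cos (l/T) : ℂ) - (Real.sin (l/T) : ℂ) * I := by
        have : (-(l * (1/T : ℝ) * I) : ℂ) = ((-(l/T) : ℝ) : ℂ) * I := by push_cast; ring
        rw [this, Complex.exp_mul_I, ← ofReal_cos, ← ofReal_sin, Real.cos_neg, Real.sin_neg]
        push_cast; ring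
      have e3 : rr l = (m : ℂ) * (1 / (1/2 + l * I)) := by rw [rr, ← hm]; ring
      rw [e3, e1, e2]
      have e4 : (m : ℂ) * (((1/(1/4 + l^2) : ℝ) : ℂ) * (1/2 - l * I)) * (w:ℂ) *
          ((Real.cos (l/T) : ℂ) - (Real.sin (l/T) : ℂ) * I) =
          ((m * (1/(1/4+l^2)) * w : ℝ) : ℂ) * ((((1/2) * Real.cos (l/T) - l * Real.sin (l/T) : ℝ) : ℂ)
            - ((1/2 * Real.sin (l/T) + l * Real.cos (l/T) : ℝ) : ℂ) * I) := by
        push_cast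
        ring_nf; rw [Complex.I_sq]; ring
      rw [e4, Complex.re_ofReal_mul]
      simp only [sub_re, ofReal_re, mul_re, I_re, I_im, ofReal_im, mul_zero, zero_mul, sub_zero]
      ring
    rw [hre]
    by_cases hl0 : l = 0
    · subst hl0
      have h0S : (0:ℝ) ∉ S := fun h => by linarith [(hS 0 h).1]
      have hw1 : w = 1 := by simp [hw]
      simp only [hm, hw1, h0S, if_true, if_false]
      simp; linarith
    · by_cases hlT : T < |l|
      · have hw0 : w = 0 := by
          rw [hw, max_eq_left]
          rw [sub_nonpos, le_div_iff₀ hT]; linarith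
        have hlS : l ∉ S := fun h => by
          have := hS l h
          rw [abs_of_nonneg (by linarith)] at hlT
          linarith
        simp only [hw0, hlS, hl0, if_false, mul_zero, zero_mul, zero_div, add_zero, sub_zero]
        positivity
      · push Not at hlT
        have hm' : m = mz l := by simp [hm, hl0]
        -- l sin (l/T) ≥ l^2/(2T)
        have hsin : l^2 / (2*T) ≤ l * Real.sin (l/T) := by
          have hgen : ∀ x : ℝ, 0 ≤ x → x ≤ 1 → x / 2 ≤ Real.sin x := by
            intro x h0 h1
            rcases h0.eq_or_lt with rfl | h0
            · simp
            · have := Real.sin_gt_sub_cube h0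
              nlinarith [mul_pos h0 h0, mul_nonneg h0.le (sub_nonneg.2 h1)]
          have h1 := hgen (|l|/T) (by positivity) (by rw [div_le_one hT]; exact hlT)
          have h2 : l * Real.sin (l/T) = |l| * Real.sin (|l|/T) := by
            rcases abs_cases l with ⟨h, _⟩ | ⟨h, _⟩
            · rw [h]
            · rw [h, neg_div, Real.sin_neg]; ring
          rw [h2]
          calc l^2/(2*T) = |l| * (|l|/T/2) := by rw [← sq_abs]; field_simp
            _ ≤ _ := by gcongr
        have hcos := Real.cos_le_one (l/T)
        have hb : m * w * (1/2 * Real.cos (l/T) - l * Real.sin (l/T)) / (1/4 + l^2) ≤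
            (1/2) * (m / (1/4 + l^2)) - m * w * (l^2/(2*T)) / (1/4+l^2) := by
          rw [← mul_div_assoc, ← sub_div]
          gcongr
          have h3 : m * w * (1/2 * Real.cos (l/T)) ≤ 1/2 * m := by
            have : m * w ≤ m := mul_le_of_le_one_right hmm hw1
            nlinarith [mul_nonneg hmm hw0]
          have h4 := mul_le_mul_of_nonneg_left hsin (mul_nonneg hmm hw0)
          nlinarith
        refine hb.trans ?_
        rw [hm']
        simp only [hl0, if_false, add_zero]
        have hnn : 0 ≤ (mz l:ℝ) * w * (l^2/(2*T)) / (1/4+l^2) := by positivity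
        by_cases hlS : l ∈ S
        · simp only [hlS, if_true]
          obtain ⟨h1, h2⟩ := hS l hlS
          have hw2 : 1/2 ≤ w := by
            refine le_trans ?_ (le_max_right _ _)
            rw [abs_of_nonneg (by linarith)]
            have : l / T ≤ 1/2 := by rw [div_le_iff₀ hT]; linarith
            linarith
          have hl2 : 1/2 ≤ l^2 / (1/4 + l^2) := by
            rw [le_div_iff₀ hq]; nlinarith
          have : (mz l:ℝ) / (8*T) ≤ (mz l:ℝ) * w * (l^2/(2*T)) / (1/4+l^2) := by
            calc (mz l:ℝ) / (8*T) = (mz l:ℝ) * (1/2) * (1/2) / (2*T) := by field_simp; norm_num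
              _ ≤ (mz l:ℝ) * w * (l^2 / (1/4 + l^2)) / (2*T) := by gcongr
              _ = _ := by field_simp
          linarith
        · simp only [hlS, if_false]; linarith
  have h1 := hf.trans (Finset.sum_le_sum fun l _ => hterm l)
  rw [Finset.sum_sub_distrib, Finset.sum_add_distrib, ← Finset.mul_sum] at h1
  have h2 := hKb R
  have h3 : ∑ l ∈ R, (if l = 0 then (1:ℝ) else 0) = 1 := by
    rw [Finset.sum_ite_eq']; simp [hR]
  have h4 : ∑ l ∈ R, (if l ∈ S then (mz l : ℝ) / (8 * T) else 0) = ∑ l ∈ S, (mz l : ℝ) / (8*T) := by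
    rw [← Finset.sum_filter]
    congr 1
    ext l
    simp only [Finset.mem_filter, hR, Finset.mem_insert, Finset.mem_union]
    tauto
  rw [h3, h4, ← Finset.sum_div] at h1
  have h5 : (∑ l ∈ S, (mz l : ℝ)) / (8*T) ≤ K/2 + 1 := by linarith
  rw [div_le_iff₀ (by positivity)] at h5
  rw [hT_def] at h5
  linarith

theorem final_contra (hRH : ∀ s : ℂ, 1/2 < s.re → Zt s ≠ 0)
    (hpd : ∀ (B : Finset ℝ) (a : ℝ → ℂ),
      0 ≤ (∑ x ∈ B, ∑ y ∈ B, a x * starRingEnd ℂ (a y) * rr (x - y)).re) : False := by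
  classical
  obtain ⟨K, hK, hKb⟩ := count_upper hpd
  obtain ⟨M, hM⟩ := exists_nat_gt (7 * K + 1)
  obtain ⟨t0, ht0⟩ := eventually_atTop.1 (zeros_L hRH M)
  set t1 := max t0 4
  have hS : ∀ j : ℕ, ∃ S : Finset ℝ, (∀ γ ∈ S, |γ - (t1 + 7 * j)| ≤ 3) ∧ M ≤ ∑ γ ∈ S, mz γ := by
    intro j
    refine ht0 _ ?_
    have : t0 ≤ t1 := le_max_left _ _
    have : (0:ℝ) ≤ j := by positivity
    linarith
  choose S hS1 hS2 using hS
  have ht14 : 4 ≤ t1 := le_max_right _ _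
  have key : ∀ J : ℕ, (M : ℝ) * J ≤ K * (t1 + 7 * J + 3) := by
    intro J
    have hb := hKb (t1 + 7 * J + 3) (by positivity) ((Finset.range J).biUnion S) (by
      intro γ hγ
      obtain ⟨j, hj, hγ⟩ := Finset.mem_biUnion.1 hγ
      have h1 := abs_le.1 (hS1 j γ hγ)
      have h2 : (j:ℝ) ≤ J := by exact_mod_cast (Finset.mem_range.1 hj).le
      have h3 : (0:ℝ) ≤ j := by positivity
      constructor <;> linarith)
    refine le_trans ?_ hb
    rw [Finset.sum_biUnion]
    · calc (M:ℝ) * J = ∑ j ∈ Finset.range J, (M:ℝ) := by simp [mul_comm]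
        _ ≤ _ := by
          refine Finset.sum_le_sum fun j _ => ?_
          exact_mod_cast hS2 j
    · intro i _ j _ hij
      rw [Function.onFun, Finset.disjoint_left]
      intro γ h1 h2
      have h1 := abs_le.1 (hS1 i γ h1)
      have h2 := abs_le.1 (hS1 j γ h2)
      rcases lt_or_gt_of_ne hij with h | h
      · have : (i:ℝ) + 1 ≤ j := by exact_mod_cast h
        linarith
      · have : (j:ℝ) + 1 ≤ i := by exact_mod_cast h
        linarith
  obtain ⟨J, hJ⟩ := exists_nat_gt (K * (t1 + 3))
  have := key J
  have hJ0 : (0:ℝ) ≤ J := by positivity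
  nlinarith

end LW
end

section
namespace LW
open Complex Topology MeasureTheory ProbabilityTheory

lemma landau_local {Ω : Type*} [MeasurableSpace Ω] {μ : Measure Ω} {Y : Ω → ℝ}
    (hY : Measurable Y) (hY0 : ∀ᵐ ω ∂μ, Y ω ≤ 0) {c ρ σ : ℝ}
    (hc : c ∈ interior (integrableExpSet Y μ)) {g : ℂ → ℂ}
    (hg : DifferentiableOn ℂ g (Metric.ball (c:ℂ) ρ))
    (heq : g =ᶠ[𝓝 (c:ℂ)] complexMGF Y μ) (h1 : c - ρ < σ) (h2 : σ ≤ c) :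
    σ ∈ integrableExpSet Y μ := by
  have hz : (σ:ℂ) ∈ Metric.ball (c:ℂ) ρ := by
    rw [Metric.mem_ball, Complex.dist_eq, ← Complex.ofReal_sub, Complex.norm_real,
      Real.norm_eq_abs, abs_of_nonpos (by linarith)]
    linarith
  have hs := (Complex.hasSum_taylorSeries_on_ball hg hz).summable
  let b : ℕ → Ω → ℝ := fun n ω => ((σ - c) * Y ω)^n / n.factorial * Real.exp (c * Y ω)
  have hbi : ∀ n, Integrable (b n) μ := by
    intro n
    have := (integrable_pow_mul_exp_of_mem_interior_integrableExpSet hc n).const_mul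
      ((σ - c)^n / n.factorial)
    refine this.congr (Eventually.of_forall fun ω => ?_)
    simp only [b, mul_pow]; ring
  have hb0 : ∀ n, 0 ≤ᵐ[μ] b n := by
    intro n
    filter_upwards [hY0] with ω hω
    have : 0 ≤ (σ - c) * Y ω := mul_nonneg_of_nonpos_of_nonpos (by linarith) hω
    simp only [b, Pi.zero_apply]; positivity
  have hterm : ∀ n : ℕ, ((n.factorial : ℂ)⁻¹ • ((σ:ℂ) - c) ^ n • iteratedDeriv n g c)
      = ((∫ ω, b n ω ∂μ : ℝ) : ℂ) := by
    intro n
    rw [heq.iteratedDeriv_eq n, iteratedDeriv_complexMGF (by simpa using hc), ← integral_complex_ofReal]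
    simp only [smul_eq_mul]
    rw [← integral_const_mul, ← integral_const_mul]
    congr 1
    ext ω
    simp only [b]
    push_cast
    rw [mul_pow]; ring
  simp only [hterm] at hs
  have hs' : Summable fun n => ∫ ω, b n ω ∂μ := by exact_mod_cast hs
  have hexp : ∀ ω, HasSum (fun n => b n ω) (Real.exp (σ * Y ω)) := by
    intro ω
    have h := (NormedSpace.expSeries_div_hasSum_exp ((σ - c) * Y ω)).mul_right (Real.exp (c * Y ω))
    rw [← Real.exp_eq_exp_ℝ, ← Real.exp_add] at h
    have e : σ * Y ω = (σ - c) * Y ω + c * Y ω := by ring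
    rw [e]; exact h
  rw [integrableExpSet]
  show Integrable _ μ
  refine ⟨by fun_prop, ?_⟩
  have : ∫⁻ ω, ‖Real.exp (σ * Y ω)‖ₑ ∂μ = ∑' n, ∫⁻ ω, ENNReal.ofReal (b n ω) ∂μ := by
    rw [← lintegral_tsum (fun n => by exact (hbi n).aemeasurable.ennreal_ofReal)]
    apply lintegral_congr_ae
    have hall : ∀ᵐ ω ∂μ, ∀ n, 0 ≤ b n ω := ae_all_iff.2 hb0
    filter_upwards [hall] with ω hω
    rw [← ENNReal.ofReal_tsum_of_nonneg hω (hexp ω).summable, (hexp ω).tsum_eq,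
      Real.enorm_of_nonneg (Real.exp_nonneg _)]
  rw [HasFiniteIntegral, this]
  simp_rw [← ofReal_integral_eq_lintegral_ofReal (hbi _) (hb0 _)]
  rw [← ENNReal.ofReal_tsum_of_nonneg (fun n => integral_nonneg_of_ae (hb0 n)) hs']
  exact ENNReal.ofReal_lt_top

lemma Ioi_sub_interior {Ω : Type*} [MeasurableSpace Ω] {μ : Measure Ω} {Y : Ω → ℝ} {a : ℝ}
    (h : ∀ σ > a, σ ∈ integrableExpSet Y μ) {σ : ℝ} (hσ : a < σ) :
    σ ∈ interior (integrableExpSet Y μ) :=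
  interior_maximal (s := integrableExpSet Y μ) (t := Ioi a) h isOpen_Ioi hσ

lemma id_extend {Ω : Type*} [MeasurableSpace Ω] {μ : Measure Ω} {Y : Ω → ℝ} {a : ℝ} (ha : 1/2 ≤ a)
    (h : ∀ σ > a, σ ∈ integrableExpSet Y μ) {V : ℂ → ℂ} 
    (hV : DifferentiableOn ℂ V {s | 1/2 < s.re})
    (hid : ∀ s : ℂ, 1 < s.re → Zt s * deriv (fun z => z * complexMGF Y μ z) s = - V s) :
    ∀ s : ℂ, a < s.re → Zt s * deriv (fun z => z * complexMGF Y μ z) s = - V s := by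
  have hop : ∀ b : ℝ, IsOpen {s : ℂ | b < s.re} := fun b => isOpen_lt continuous_const Complex.continuous_re
  have hF : DifferentiableOn ℂ (fun z => z * complexMGF Y μ z) {s | a < s.re} := by
    intro s hs
    exact (differentiableAt_id.mul (hasDerivAt_complexMGF (Ioi_sub_interior h hs)).differentiableAt).differentiableWithinAt
  have h1 : AnalyticOnNhd ℂ (fun s => Zt s * deriv (fun z => z * complexMGF Y μ z) s) {s | a < s.re} :=
    (Zt_differentiable.differentiableOn.mul (hF.deriv (hop a))).analyticOnNhd (hop a)
  have h2 : AnalyticOnNhd ℂ (fun s => - V s) {s | a < s.re} :=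
    (hV.neg.mono (fun s hs => lt_of_le_of_lt ha hs)).analyticOnNhd (hop a)
  have hz : ((max a 1 + 1 : ℝ) : ℂ) ∈ {s : ℂ | a < s.re} := by
    show a < ((max a 1 + 1 : ℝ) : ℂ).re
    rw [Complex.ofReal_re]; linarith [le_max_left a 1]
  have hz1 : ((max a 1 + 1 : ℝ) : ℂ) ∈ {s : ℂ | 1 < s.re} := by
    show 1 < ((max a 1 + 1 : ℝ) : ℂ).re
    rw [Complex.ofReal_re]; linarith [le_max_right a 1]
  have hpre : IsPreconnected {s : ℂ | a < s.re} :=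
    (convex_halfSpace_re_gt a).isPreconnected
  exact fun s hs => h1.eqOn_of_preconnected_of_eventuallyEq h2 hpre hz
    (by filter_upwards [(hop 1).mem_nhds hz1] with s hs using hid s hs) hs

lemma landau_global {Ω : Type*} [MeasurableSpace Ω] {μ : Measure Ω} {Y : Ω → ℝ}
    (hY : Measurable Y) (hY0 : ∀ᵐ ω ∂μ, Y ω ≤ 0)
    (h : ∀ σ > 1, σ ∈ integrableExpSet Y μ) {V : ℂ → ℂ} 
    (hV : DifferentiableOn ℂ V {s | 1/2 < s.re})
    (hid : ∀ s : ℂ, 1 < s.re → Zt s * deriv (fun z => z * complexMGF Y μ z) s = - V s) :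
    ∀ σ > 1/2, σ ∈ integrableExpSet Y μ := by
  by_contra hcon
  push Not at hcon
  obtain ⟨σ1, hσ1, hn⟩ := hcon
  let E := integrableExpSet Y μ
  have hup : ∀ σ ∈ E, ∀ τ, σ ≤ τ → τ ∈ E := by
    intro σ hσ τ hτ
    refine Integrable.mono' (g := fun ω => Real.exp (σ * Y ω)) hσ (by fun_prop) ?_
    filter_upwards [hY0] with ω hω
    rw [Real.norm_of_nonneg (Real.exp_nonneg _)]
    exact Real.exp_le_exp.2 (mul_le_mul_of_nonpos_right hτ hω)
  have hlow : ∀ σ ∈ E, σ1 ≤ σ := by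
    intro σ hσ
    by_contra hlt
    exact hn (hup σ hσ σ1 (not_le.1 hlt).le)
  have hne : E.Nonempty := ⟨2, h 2 (by norm_num)⟩
  have hbdd : BddBelow E := ⟨σ1, hlow⟩
  set a := sInf E with ha
  have ha1 : σ1 ≤ a := le_csInf hne hlow
  have hgt : ∀ σ > a, σ ∈ E := by
    intro σ hσ
    obtain ⟨τ, hτ, hlt⟩ := exists_lt_of_csInf_lt hne hσ
    exact hup τ hτ σ hlt.le
  have hZa : Zt (a:ℂ) ≠ 0 := by
    by_cases h1 : a < 1
    · exact Zt_real_ne_zero a (by linarith) h1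
    · exact Zt_ne_zero_of_one_le (by simpa using h1)
  have hid' := id_extend (by linarith : 1/2 ≤ a) hgt hV hid
  obtain ⟨r, hr, hball⟩ : ∃ r > 0, ∀ z ∈ Metric.ball (a:ℂ) r, Zt z ≠ 0 ∧ 1/2 < z.re := by
    have : ∀ᶠ z in 𝓝 (a:ℂ), Zt z ≠ 0 ∧ 1/2 < z.re := by
      refine (Zt_differentiable.continuous.continuousAt.eventually_ne hZa).and ?_
      exact (isOpen_lt continuous_const Complex.continuous_re).mem_nhds (by
        show (1/2:ℝ) < (a:ℂ).re
        rw [Complex.ofReal_re]; linarith)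
    exact Metric.eventually_nhds_iff_ball.1 this
  let η := r/3
  let c := a + η
  have hsub : Metric.ball (c:ℂ) (2*η) ⊆ Metric.ball (a:ℂ) r := by
    apply Metric.ball_subset_ball'
    rw [Complex.dist_eq, ← Complex.ofReal_sub, Complex.norm_real, Real.norm_eq_abs]
    have : c - a = r/3 := by simp [c, η]
    rw [this, abs_of_pos (by positivity)]
    simp only [η]; linarith
  have hη : 0 < η := by simp only [η]; positivity
  have hcint : c ∈ interior E := Ioi_sub_interior hgt (by simp only [c]; linarith)
  have hWd : DifferentiableOn ℂ (fun s => - V s / Zt s) (Metric.ball (c:ℂ) (2*η)) := by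
    refine DifferentiableOn.div ?_ Zt_differentiable.differentiableOn (fun z hz => (hball z (hsub hz)).1)
    exact (hV.mono (fun z hz => (hball z (hsub hz)).2)).neg
  obtain ⟨P, hPc, hP⟩ := (hWd.isExactOn_ball).with_val_at (c:ℂ) (c * complexMGF Y μ c)
  have hball0 : ∀ z ∈ Metric.ball (c:ℂ) (2*η), z ≠ 0 := by
    intro z hz h0
    have := (hball z (hsub hz)).2
    rw [h0] at this; simp at this; linarith
  have hg : DifferentiableOn ℂ (fun z => P z / z) (Metric.ball (c:ℂ) (2*η)) := by
    refine DifferentiableOn.div ?_ differentiableOn_id hball0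
    exact fun z hz => (hP z hz).differentiableAt.differentiableWithinAt
  have hre : ∀ z ∈ Metric.ball (c:ℂ) η, a < z.re := by
    intro z hz
    have h3 := (abs_le.1 (Complex.abs_re_le_norm (z - c))).1
    rw [Metric.mem_ball, Complex.dist_eq] at hz
    simp only [Complex.sub_re, Complex.ofReal_re] at h3
    simp only [c] at h3 hz
    linarith
  have hss : Metric.ball (c:ℂ) η ⊆ Metric.ball (c:ℂ) (2*η) := Metric.ball_subset_ball (by linarith)
  have heqP : ∀ z ∈ Metric.ball (c:ℂ) η, P z = z * complexMGF Y μ z := by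
    have hdF : ∀ z ∈ Metric.ball (c:ℂ) η, DifferentiableAt ℂ (fun z => z * complexMGF Y μ z) z := by
      intro z hz
      exact differentiableAt_id.mul (hasDerivAt_complexMGF (Ioi_sub_interior hgt (hre z hz))).differentiableAt
    intro w hw
    have := (convex_ball (c:ℂ) η).is_const_of_fderivWithin_eq_zero (𝕜 := ℂ)
      (f := fun z => P z - z * complexMGF Y μ z) (x := w) (y := c)
      (fun z hz => ((hP z (hss hz)).differentiableAt.sub (hdF z hz)).differentiableWithinAt) ?_ hw (Metric.mem_ball_self hη)
    · have h4 := this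
      simp only [hPc, sub_self] at h4
      exact sub_eq_zero.1 h4
    · intro z hz
      rw [fderivWithin_of_isOpen Metric.isOpen_ball hz]
      have hd : HasDerivAt (fun z => P z - z * complexMGF Y μ z) 0 z := by
        have h5 := (hP z (hss hz)).sub (hdF z hz).hasDerivAt
        have h6 := hid' z (hre z hz)
        have h7 := (hball z (hsub (hss hz))).1
        have : - V z / Zt z - deriv (fun z => z * complexMGF Y μ z) z = 0 := by
          rw [← h6]; field_simp; ring
        rw [← this]; exact h5
      have := hd.hasFDerivAt.fderiv
      rw [this]; ext; simp
  have hev : (fun z => P z / z) =ᶠ[𝓝 (c:ℂ)] complexMGF Y μ := by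
    filter_upwards [Metric.ball_mem_nhds (c:ℂ) hη] with z hz
    rw [heqP z hz]
    field_simp [hball0 z (hss hz)]
  have hfin := landau_local hY hY0 hcint hg hev (σ := a - η/2) (by simp only [c]; linarith) (by simp only [c]; linarith)
  have := csInf_le hbdd hfin
  linarith

end LW
end

section
namespace LW
open Complex Topology MeasureTheory ProbabilityTheory

lemma Zt_factor (a : ℂ) : ∃ g : ℂ → ℂ, Differentiable ℂ g ∧
    (∀ z, Zt z = (z-a)^(analyticOrderNatAt Zt a) * g z) ∧ g a ≠ 0 :=
  factor_one Zt_differentiable Zt_nonvanish a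

lemma Zt_logderiv (a : ℂ) {g : ℂ → ℂ} (hg : Differentiable ℂ g) {n : ℕ}
    (hf : ∀ z, Zt z = (z-a)^n * g z) (z : ℂ) :
    (z - a) * deriv Zt z = n * Zt z + (z-a)^(n+1) * deriv g z := by
  have h1 : HasDerivAt (fun z => (z-a)^n * g z)
      ((n * (z-a)^(n-1) * 1) * g z + (z-a)^n * deriv g z) z :=
    (((hasDerivAt_id z).sub_const a).pow n).mul (hg z).hasDerivAt
  have h2 : deriv Zt z = (n * (z-a)^(n-1) * 1) * g z + (z-a)^n * deriv g z := by
    have : Zt = fun z => (z-a)^n * g z := funext hf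
    rw [this]; exact h1.deriv
  rw [h2, hf z]
  rcases n with _ | n
  · simp
  · simp only [Nat.add_sub_cancel]; push_cast; ring

lemma zero_free {R Φ : ℂ → ℂ} {ε : ℂ} (hε : ε ≠ 0)
    (hR : ContinuousOn R {s | 1/2 < s.re}) (hΦ : ContinuousOn Φ {s | 1/2 < s.re})
    (hid : ∀ s : ℂ, 1/2 < s.re → Zt s * Φ s = - (ε * deriv Zt s + Zt s * R s)) :
    ∀ s : ℂ, 1/2 < s.re → Zt s ≠ 0 := by
  intro a ha h0
  obtain ⟨g, hg, hf, hga⟩ := Zt_factor a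
  set n := analyticOrderNatAt Zt a
  have hn : n ≠ 0 := by
    intro hn
    have := hf a
    rw [hn, h0] at this
    simp at this; exact hga this.symm
  have hU : {s : ℂ | 1/2 < s.re} ∈ 𝓝 a := (isOpen_lt continuous_const Complex.continuous_re).mem_nhds ha
  have hcg' : Continuous (deriv g) := (hg.contDiff (n := 1)).continuous_deriv le_rfl
  have key : ∀ᶠ z in 𝓝[≠] a, ε * (n * g z + (z-a) * deriv g z) + (z-a) * (g z * (R z + Φ z)) = 0 := by
    filter_upwards [mem_nhdsWithin_of_mem_nhds hU, self_mem_nhdsWithin] with z hz hza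
    have hza' : z - a ≠ 0 := sub_ne_zero.2 hza
    have h1 := hid z hz
    have h2 := Zt_logderiv a hg hf z
    rw [hf z] at h1 h2
    have h3 : (z-a)^n * (ε * (n * g z + (z-a) * deriv g z) + (z-a) * (g z * (R z + Φ z))) = 0 := by
      linear_combination (z - a) * h1 - ε * h2
    exact (mul_eq_zero.1 h3).resolve_left (pow_ne_zero _ hza')
  have hcont : ContinuousAt (fun z => ε * (n * g z + (z-a) * deriv g z) + (z-a) * (g z * (R z + Φ z))) a := by
    have := hR.continuousAt hU
    have := hΦ.continuousAt hU
    have := hg.continuous.continuousAt (x := a)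
    have := hcg'.continuousAt (x := a)
    fun_prop
  have hlim := tendsto_nhds_unique (hcont.tendsto.mono_left nhdsWithin_le_nhds)
    (tendsto_const_nhds.congr' (by filter_upwards [key] with z hz using hz.symm))
  simp [hε, hn, hga] at hlim

lemma lim_logderiv (hRH : ∀ s:ℂ, 1/2 < s.re → Zt s ≠ 0) (l : ℝ) :
    Tendsto (fun σ : ℝ => (σ:ℂ) * (deriv Zt (1/2 + σ + l*I) / Zt (1/2+σ+l*I))) (𝓝[>] 0) (𝓝 (mz l)) := by
  obtain ⟨g, hg, hf, hga⟩ := Zt_factor (1/2 + l*I)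
  have hcg' : Continuous (deriv g) := (hg.contDiff (n := 1)).continuous_deriv le_rfl
  have h1 : Tendsto (fun σ : ℝ => (mz l : ℂ) + (σ:ℂ) * (deriv g (1/2 + σ + l*I) / g (1/2+σ+l*I)))
      (𝓝[>] 0) (𝓝 (mz l)) := by
    have hc : ContinuousAt (fun σ : ℝ => (mz l : ℂ) + (σ:ℂ) * (deriv g (1/2 + σ + l*I) / g (1/2+σ+l*I))) 0 := by
      have : ContinuousAt (fun σ : ℝ => (deriv g (1/2 + σ + l*I) / g (1/2+σ+l*I))) 0 := by
        refine ContinuousAt.div ?_ ?_ (by simpa using hga)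
        · exact (hcg'.comp (by fun_prop)).continuousAt
        · exact (hg.continuous.comp (by fun_prop)).continuousAt
      fun_prop
    have := hc.tendsto.mono_left (nhdsWithin_le_nhds (s := Ioi 0))
    simpa using this
  refine h1.congr' ?_
  filter_upwards [self_mem_nhdsWithin] with σ hσ
  have hσ' : (0:ℝ) < σ := hσ
  have hne := hRH (1/2 + σ + l*I) (by simp [hσ'])
  have h2 := Zt_logderiv _ hg hf (1/2 + σ + l*I)
  have h3 := hf (1/2 + σ + l*I)
  have e : (1/2 + σ + l*I : ℂ) - (1/2 + l*I) = σ := by ring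
  rw [e] at h2 h3
  have hg0 : g (1/2 + σ + l*I) ≠ 0 := by
    intro h; rw [h, mul_zero] at h3; exact hne h3
  have hm : mz l = analyticOrderNatAt Zt (1/2 + l*I) := rfl
  rw [← hm] at h2 h3
  symm
  rw [← mul_div_assoc, h2, add_div, mul_div_assoc, div_self hne, mul_one]
  congr 1
  have hs0 : (σ:ℂ) ≠ 0 := by exact_mod_cast hσ'.ne'
  rw [h3, ← mul_div_assoc, div_eq_div_iff (mul_ne_zero (pow_ne_zero _ hs0) hg0) hg0]
  ring

section
variable {Ω : Type*} [MeasurableSpace Ω] {μ : Measure Ω} {Y : Ω → ℝ}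

lemma lim_F1 (hY0 : ∀ᵐ ω ∂μ, Y ω ≤ 0)
    (h : ∀ σ > 1/2, σ ∈ integrableExpSet Y μ) (hRH : ∀ s:ℂ, 1/2 < s.re → Zt s ≠ 0)
    {R : ℂ → ℂ} {ε : ℝ}
    (hid : ∀ s : ℂ, 1/2 < s.re → Zt s * deriv (fun z => z * complexMGF Y μ z) s
      = - (ε * deriv Zt s + Zt s * R s))
    (hR : ∀ l : ℝ, Tendsto (fun σ : ℝ => (σ:ℂ) * R (1/2 + σ + l*I)) (𝓝[>] 0)
      (𝓝 (ε * (if l = 0 then 1/2 else 0)))) (l : ℝ) :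
    Tendsto (fun σ : ℝ => (σ:ℂ) * - ∫ ω, (Y ω : ℂ) * cexp ((1/2 + σ + l*I) * Y ω) ∂μ) (𝓝[>] 0)
      (𝓝 (ε * rr l)) := by
  set F0 := complexMGF Y μ with hF0
  let F1 : ℂ → ℂ := fun s => - ∫ ω, (Y ω : ℂ) * cexp (s * Y ω) ∂μ
  let W : ℂ → ℂ := fun s => ε * (deriv Zt s / Zt s) + R s
  have hmain : ∀ s : ℂ, 1/2 < s.re → s * F1 s = W s + F0 s := by
    intro s hs
    have h1 : HasDerivAt (fun z => z * F0 z) (1 * F0 s + s * (- F1 s)) s := by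
      have := (hasDerivAt_id s).mul (hasDerivAt_complexMGF (Ioi_sub_interior h hs))
      simp only [F1, neg_neg]
      exact this
    have h2 := hid s hs
    rw [h1.deriv] at h2
    have h3 := hRH s hs
    simp only [W]
    field_simp
    linear_combination -h2
  have hW : ∀ l : ℝ, Tendsto (fun σ : ℝ => (σ:ℂ) * W (1/2 + σ + l*I)) (𝓝[>] 0)
      (𝓝 (ε * (mz l + if l = 0 then 1/2 else 0))) := by
    intro l
    have := ((lim_logderiv hRH l).const_mul (ε:ℂ)).add (hR l)
    rw [← mul_add] at this
    refine this.congr fun σ => ?_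
    simp only [W]; ring
  -- real quantities
  let f0 : ℝ → ℝ := fun σ => mgf Y μ (1/2 + σ)
  let f1 : ℝ → ℝ := fun σ => ∫ ω, (- Y ω) * Real.exp ((1/2 + σ) * Y ω) ∂μ
  have hf1F : ∀ σ : ℝ, F1 (1/2 + σ) = f1 σ := by
    intro σ
    simp only [F1, f1]
    rw [← integral_complex_ofReal, ← integral_neg]
    congr 1; ext ω; push_cast; ring
  have hf0F : ∀ σ : ℝ, F0 (1/2 + σ) = f0 σ := by
    intro σ
    have := complexMGF_ofReal (X := Y) (μ := μ) (1/2 + σ)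
    simp only [hF0, f0]
    rw [← this]; push_cast; rfl
  have hf1i : ∀ σ : ℝ, 0 < σ → Integrable (fun ω => (- Y ω) * Real.exp ((1/2 + σ) * Y ω)) μ := by
    intro σ hσ
    have := integrable_pow_mul_exp_of_mem_interior_integrableExpSet
      (Ioi_sub_interior h (by linarith : 1/2 < 1/2 + σ)) 1
    simpa using this.neg
  have hf1_nonneg : ∀ σ, 0 ≤ f1 σ := by
    intro σ
    apply integral_nonneg_of_ae
    filter_upwards [hY0] with ω hω
    have : 0 ≤ - Y ω := by linarith
    simp only [Pi.zero_apply]; positivity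
  have hf0_nonneg : ∀ σ, 0 ≤ f0 σ := fun σ => mgf_nonneg
  have hf0_le : ∀ U > 0, ∀ σ > 0, f0 σ ≤ Real.exp (2*U) * mgf Y μ 2 + f1 σ / U := by
    intro U hU σ hσ
    have hi2 : Integrable (fun ω => Real.exp (2 * Y ω)) μ := h 2 (by norm_num)
    have : f0 σ ≤ ∫ ω, (Real.exp (2*U) * Real.exp (2 * Y ω) + ((- Y ω) * Real.exp ((1/2 + σ) * Y ω))/U) ∂μ := by
      apply integral_mono_ae
      · exact h (1/2+σ) (by linarith)
      · exact (hi2.const_mul _).add ((hf1i σ hσ).div_const _)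
      · filter_upwards [hY0] with ω hω
        have hn : 0 ≤ - Y ω := by linarith
        by_cases hc : - U ≤ Y ω
        · have e1 : Real.exp ((1/2+σ) * Y ω) ≤ 1 := Real.exp_le_one_iff.2 (mul_nonpos_of_nonneg_of_nonpos (by linarith) hω)
          have e2 : 1 ≤ Real.exp (2*U) * Real.exp (2 * Y ω) := by
            rw [← Real.exp_add]; exact Real.one_le_exp (by linarith)
          have e3 : 0 ≤ ((- Y ω) * Real.exp ((1/2 + σ) * Y ω))/U := by positivity
          linarith
        · push Not at hc
          have e1 : 0 ≤ Real.exp (2*U) * Real.exp (2 * Y ω) := by positivity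
          have e2 : Real.exp ((1/2+σ) * Y ω) ≤ ((- Y ω) * Real.exp ((1/2 + σ) * Y ω))/U := by
            rw [le_div_iff₀ hU, mul_comm]
            exact mul_le_mul_of_nonneg_right (by linarith) (Real.exp_nonneg _)
          linarith
    rw [integral_add (hi2.const_mul _) ((hf1i σ hσ).div_const _), integral_const_mul, integral_div] at this
    exact this
  -- bound
  obtain ⟨M, hM⟩ : ∃ M : ℝ, ∀ᶠ σ in 𝓝[>] (0:ℝ), σ * f1 σ ≤ M := by
    obtain ⟨K, hb⟩ : ∃ K : ℝ, ∀ᶠ σ : ℝ in 𝓝[>] (0:ℝ), ‖(σ:ℂ) * W (1/2 + σ + (0:ℝ)*I)‖ < K :=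
      ⟨_, ((hW 0).norm.eventually (gt_mem_nhds (lt_add_one _)))⟩
    refine ⟨4 * (K + Real.exp (2*4) * mgf Y μ 2), ?_⟩
    have hlt : ∀ᶠ σ in 𝓝[>] (0:ℝ), σ < 1 := mem_nhdsWithin_of_mem_nhds (gt_mem_nhds one_pos)
    filter_upwards [hb, self_mem_nhdsWithin, hlt] with σ h1 hσ hσ1
    have hσ' : 0 < σ := hσ
    have h2 := hmain (1/2 + σ) (by simp [hσ'])
    rw [hf1F, hf0F] at h2
    have h3 := hf0_le 4 (by norm_num) σ hσ
    have h4 : (1/2 + σ) * f1 σ ≤ ‖W (1/2 + σ)‖ + f0 σ := by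
      calc (1/2 + σ) * f1 σ = ‖((1/2 + σ : ℂ)) * f1 σ‖ := by
            have : ((1/2 + σ : ℂ)) * f1 σ = (((1/2 + σ) * f1 σ : ℝ) : ℂ) := by push_cast; ring
            rw [this, Complex.norm_real, Real.norm_of_nonneg]
            exact mul_nonneg (by linarith) (hf1_nonneg σ)
        _ ≤ _ := by
            rw [h2]
            refine (norm_add_le _ _).trans ?_
            rw [Complex.norm_real, Real.norm_of_nonneg (hf0_nonneg σ)]
    have h5 : σ * ‖W (1/2 + σ)‖ ≤ K := by
      have := h1.le
      rw [norm_mul, Complex.norm_real, Real.norm_of_nonneg hσ'.le] at this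
      simpa using this
    have hm2 : 0 ≤ Real.exp (2*4) * mgf Y μ 2 := mul_nonneg (Real.exp_nonneg _) mgf_nonneg
    have h6 : f1 σ ≤ 4 * (‖W (1/2+σ)‖ + Real.exp (2*4) * mgf Y μ 2) := by
      have := mul_nonneg hσ'.le (hf1_nonneg σ)
      linarith
    calc σ * f1 σ ≤ σ * (4 * (‖W (1/2+σ)‖ + Real.exp (2*4) * mgf Y μ 2)) :=
          mul_le_mul_of_nonneg_left h6 hσ'.le
      _ = 4 * (σ * ‖W (1/2+σ)‖ + σ * (Real.exp (2*4) * mgf Y μ 2)) := by ring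
      _ ≤ _ := by
          have : σ * (Real.exp (2*4) * mgf Y μ 2) ≤ 1 * (Real.exp (2*4) * mgf Y μ 2) :=
            mul_le_mul_of_nonneg_right hσ1.le hm2
          rw [one_mul] at this
          exact mul_le_mul_of_nonneg_left (add_le_add h5 this) (by norm_num)
  have hf0lim : Tendsto (fun σ : ℝ => σ * f0 σ) (𝓝[>] 0) (𝓝 0) := by
    rw [Metric.tendsto_nhds]
    intro δ hδ
    let U := 2 * (|M| + 1) / δ
    have hU : 0 < U := by positivity
    have hc : Tendsto (fun σ : ℝ => σ * (Real.exp (2*U) * mgf Y μ 2)) (𝓝[>] 0) (𝓝 0) := by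
      have : Continuous (fun σ : ℝ => σ * (Real.exp (2*U) * mgf Y μ 2)) := by fun_prop
      simpa using (this.tendsto 0).mono_left nhdsWithin_le_nhds
    filter_upwards [hM, self_mem_nhdsWithin, hc.eventually (gt_mem_nhds (half_pos hδ))] with σ h1 hσ h2
    have hσ' : 0 < σ := hσ
    rw [Real.dist_eq, sub_zero, abs_of_nonneg (mul_nonneg hσ'.le (hf0_nonneg σ))]
    have h3 := mul_le_mul_of_nonneg_left (hf0_le U hU σ hσ) hσ'.le
    rw [mul_add] at h3
    have h4 : σ * (f1 σ / U) < δ/2 := by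
      rw [← mul_div_assoc, div_lt_iff₀ hU]
      have : δ / 2 * U = |M| + 1 := by simp only [U]; field_simp
      rw [this]; linarith [le_abs_self M]
    linarith
  have hF0lim : Tendsto (fun σ : ℝ => (σ:ℂ) * F0 (1/2 + σ + l*I)) (𝓝[>] 0) (𝓝 0) := by
    refine squeeze_zero_norm' ?_ hf0lim
    filter_upwards [self_mem_nhdsWithin] with σ hσ
    have hσ' : 0 < σ := hσ
    rw [norm_mul, Complex.norm_real, Real.norm_of_nonneg hσ'.le]
    refine mul_le_mul_of_nonneg_left ?_ hσ'.le
    have := norm_complexMGF_le_mgf (X := Y) (μ := μ) (z := 1/2 + σ + l*I)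
    simpa [f0, hF0] using this
  have hinv : Tendsto (fun σ : ℝ => (1/2 + σ + l*I : ℂ)) (𝓝[>] 0) (𝓝 (1/2 + l*I)) := by
    have : Continuous (fun σ : ℝ => (1/2 + σ + l*I : ℂ)) := by fun_prop
    simpa using (this.tendsto 0).mono_left (nhdsWithin_le_nhds (s := Ioi 0))
  have hne : (1/2 + l*I : ℂ) ≠ 0 := by
    intro h; have := congrArg Complex.re h; simp at this
  have hfin := ((hW l).add hF0lim).div hinv hne
  have e : (ε * (mz l + if l = 0 then 1/2 else 0) + 0 : ℂ) / (1/2 + l*I) = ε * rr l := by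
    simp only [rr]; push_cast; split_ifs <;> simp <;> ring
  rw [e] at hfin
  refine hfin.congr' ?_
  filter_upwards [self_mem_nhdsWithin] with σ hσ
  have hσ' : 0 < σ := hσ
  have h2 := hmain (1/2 + σ + l*I) (by simp [hσ'])
  have hne2 : (1/2 + σ + l*I : ℂ) ≠ 0 := by
    intro h; have := congrArg Complex.re h; simp at this; linarith
  change _ = (σ:ℂ) * F1 (1/2 + σ + l*I)
  simp only [Pi.div_apply]
  rw [← mul_add, ← h2, div_eq_iff hne2]
  ring

lemma F1_pd (hY0 : ∀ᵐ ω ∂μ, Y ω ≤ 0)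
    (h : ∀ σ > 1/2, σ ∈ integrableExpSet Y μ) {σ : ℝ} (hσ : 0 < σ) (B : Finset ℝ) (a : ℝ → ℂ) :
    0 ≤ (∑ x ∈ B, ∑ y ∈ B, a x * starRingEnd ℂ (a y) *
      - ∫ ω, (Y ω : ℂ) * cexp ((1/2 + σ + ((x - y : ℝ):ℂ)*I) * Y ω) ∂μ).re := by
  have hi : ∀ l : ℝ, Integrable (fun ω => (Y ω : ℂ) * cexp ((1/2 + σ + (l:ℂ)*I) * Y ω)) μ := by
    intro l
    have hintg : (1/2 + σ + (l:ℂ)*I).re ∈ interior (integrableExpSet Y μ) := by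
      apply Ioi_sub_interior h; simp [hσ]
    have := integrable_pow_mul_cexp_of_re_mem_interior_integrableExpSet hintg 1
    simpa using this
  have e : (∑ x ∈ B, ∑ y ∈ B, a x * starRingEnd ℂ (a y) *
      - ∫ ω, (Y ω : ℂ) * cexp ((1/2 + σ + ((x - y : ℝ):ℂ)*I) * Y ω) ∂μ)
      = ∫ ω, ∑ x ∈ B, ∑ y ∈ B, a x * starRingEnd ℂ (a y) * - 
        ((Y ω : ℂ) * cexp ((1/2 + σ + ((x - y : ℝ):ℂ)*I) * Y ω)) ∂μ := by
    have hin : ∀ x y, Integrable (fun ω => a x * starRingEnd ℂ (a y) * - 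
        ((Y ω : ℂ) * cexp ((1/2 + σ + ((x - y : ℝ):ℂ)*I) * Y ω))) μ :=
      fun x y => (hi (x - y)).neg.const_mul _
    rw [integral_finsetSum _ (fun x _ => integrable_finsetSum _ (fun y _ => hin x y))]
    refine Finset.sum_congr rfl fun x _ => ?_
    rw [integral_finsetSum _ (fun y _ => hin x y)]
    refine Finset.sum_congr rfl fun y _ => ?_
    rw [integral_const_mul, integral_neg]
  have e2 : ∀ ω, ∑ x ∈ B, ∑ y ∈ B, a x * starRingEnd ℂ (a y) * - 
        ((Y ω : ℂ) * cexp ((1/2 + σ + ((x - y : ℝ):ℂ)*I) * Y ω))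
      = (((- Y ω) * Real.exp ((1/2+σ) * Y ω) * Complex.normSq (∑ x ∈ B, a x * cexp (x * I * Y ω)) : ℝ) : ℂ) := by
    intro ω
    push_cast
    rw [Complex.normSq_eq_conj_mul_self, map_sum, mul_comm (∑ x ∈ B, (starRingEnd ℂ) _)]
    rw [Finset.sum_mul_sum, Finset.mul_sum]
    refine Finset.sum_congr rfl fun x _ => ?_
    rw [Finset.mul_sum]
    refine Finset.sum_congr rfl fun y _ => ?_
    have : cexp ((1/2 + σ + ((x:ℂ) - y)*I) * Y ω) = cexp ((1/2+σ) * Y ω) * cexp (x * I * Y ω) * cexp (-(y * I * Y ω)) := by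
      rw [← Complex.exp_add, ← Complex.exp_add]; congr 1; ring
    rw [this, map_mul, ← Complex.exp_conj]
    simp only [map_mul, Complex.conj_ofReal, Complex.conj_I]
    have e3 : (y:ℂ) * -I * Y ω = -(y * I * Y ω) := by ring
    rw [e3]
    ring
  rw [e]
  simp only [e2]
  rw [integral_complex_ofReal, Complex.ofReal_re]
  apply integral_nonneg_of_ae
  filter_upwards [hY0] with ω hω
  have h1 : 0 ≤ - Y ω := by linarith
  have h2 := Complex.normSq_nonneg (∑ x ∈ B, a x * cexp (x * I * Y ω))
  simp only [Pi.zero_apply]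
  positivity

/-- The core contradiction. -/
lemma core (hY : Measurable Y) (hY0 : ∀ᵐ ω ∂μ, Y ω ≤ 0)
    (h : ∀ σ > 1, σ ∈ integrableExpSet Y μ) 
    {R : ℂ → ℂ} {ε : ℝ} (hε : ε = 1 ∨ ε = -1)
    (hRd : DifferentiableOn ℂ R {s | 1/2 < s.re})
    (hid : ∀ s : ℂ, 1 < s.re → Zt s * deriv (fun z => z * complexMGF Y μ z) s
      = - (ε * deriv Zt s + Zt s * R s))
    (hR : ∀ l : ℝ, Tendsto (fun σ : ℝ => (σ:ℂ) * R (1/2 + σ + l*I)) (𝓝[>] 0)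
      (𝓝 (ε * (if l = 0 then 1/2 else 0)))) : False := by
  have hop : IsOpen {s : ℂ | 1/2 < s.re} := isOpen_lt continuous_const Complex.continuous_re
  have hV : DifferentiableOn ℂ (fun s => ε * deriv Zt s + Zt s * R s) {s | 1/2 < s.re} := by
    refine DifferentiableOn.add ?_ (Zt_differentiable.differentiableOn.mul hRd)
    exact (Zt_differentiable.differentiableOn.deriv hop).const_mul _
  have hintg := landau_global hY hY0 h hV hid
  have hid' := id_extend le_rfl hintg hV hid
  have hΦ : DifferentiableOn ℂ (fun z => z * complexMGF Y μ z) {s | 1/2 < s.re} := by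
    intro s hs
    exact (differentiableAt_id.mul (hasDerivAt_complexMGF (Ioi_sub_interior hintg hs)).differentiableAt).differentiableWithinAt
  have hε0 : (ε:ℂ) ≠ 0 := by
    rcases hε with rfl | rfl <;> simp
  have hRH := zero_free hε0 hRd.continuousOn (hΦ.deriv hop).continuousOn hid'
  have hlim := fun l => lim_F1 hY0 hintg hRH hid' hR l
  have hpd : ∀ (B : Finset ℝ) (a : ℝ → ℂ),
      0 ≤ (∑ x∈B, ∑ y∈B, a x * starRingEnd ℂ (a y) * (ε * rr (x - y))).re := by
    intro B a
    have ht : Tendsto (fun σ : ℝ => (∑ x ∈ B, ∑ y ∈ B, a x * starRingEnd ℂ (a y) * ((σ:ℂ) * 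
      - ∫ ω, (Y ω : ℂ) * cexp ((1/2 + σ + ((x - y : ℝ):ℂ)*I) * Y ω) ∂μ)).re) (𝓝[>] 0)
      (𝓝 (∑ x∈B, ∑ y∈B, a x * starRingEnd ℂ (a y) * (ε * rr (x - y))).re) := by
      refine (Complex.continuous_re.tendsto _).comp ?_
      refine tendsto_finsetSum _ fun x _ => tendsto_finsetSum _ fun y _ => ?_
      exact (hlim (x - y)).const_mul _
    refine ge_of_tendsto ht ?_
    filter_upwards [self_mem_nhdsWithin] with σ hσ
    have hσ' : 0 < σ := hσ
    have h1 := mul_nonneg hσ'.le (F1_pd hY0 hintg hσ' B a)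
    rw [← Complex.re_ofReal_mul, Finset.mul_sum] at h1
    simp only [Finset.mul_sum] at h1
    convert h1 using 4
    ring
  rcases hε with rfl | rfl
  · exact final_contra hRH (by simpa using hpd)
  · have := hpd {0} (fun _ => 1)
    simp [rr] at this
    have h0 : (0:ℝ) ≤ mz 0 := by positivity
    linarith

end
end LW
end

section
namespace LW
open Complex Topology MeasureTheory

lemma prime_q_norm (p : Nat.Primes) (w : ℂ) : ‖(p:ℂ)^w‖ = (p:ℝ)^w.re := by
  rw [Complex.norm_natCast_cpow_of_pos p.2.pos]

lemma prime_q_gt (p : Nat.Primes) {w : ℂ} (hw : 0 < w.re) : 1 < ‖(p:ℂ)^w‖ := by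
  rw [prime_q_norm]
  exact Real.one_lt_rpow (by exact_mod_cast p.2.one_lt) hw

lemma hasSum_A {w : ℂ} (hw : 1 < w.re) :
    HasSum (fun p : Nat.Primes => (Real.log p : ℂ) / ((p:ℂ)^w - 1)) (- deriv riemannZeta w / riemannZeta w) := by
  have hsm := ArithmeticFunction.LSeriesSummable_vonMangoldt hw
  have hL := ArithmeticFunction.LSeries_vonMangoldt_eq_deriv_riemannZeta_div hw
  set f : ℕ → ℂ := LSeries.term (fun n => (ArithmeticFunction.vonMangoldt n : ℂ)) w with hf
  have hsm' : Summable f := hsm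
  have hsupp : Function.support f ⊆ {n | IsPrimePow n} := by
    intro n hn
    by_contra hc
    apply hn
    have h0 : ArithmeticFunction.vonMangoldt n = 0 := ArithmeticFunction.vonMangoldt_eq_zero_iff.2 hc
    rw [hf, LSeries.term_def]
    simp [h0]
  have h1 := tsum_eq_tsum_primes_of_support_subset_prime_powers hsm' hsupp
  have hterm : ∀ (p : Nat.Primes) (k : ℕ), f ((p:ℕ)^(k+1)) = (Real.log p : ℂ) * ((p:ℂ)^w)⁻¹ * (((p:ℂ)^w)⁻¹)^k := by
    intro p k
    rw [hf, LSeries.term_of_ne_zero (pow_ne_zero _ p.2.ne_zero),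
      ArithmeticFunction.vonMangoldt_apply_pow (Nat.succ_ne_zero k),
      ArithmeticFunction.vonMangoldt_apply_prime p.2, Nat.cast_pow,
      ← Complex.natCast_cpow_natCast_mul, Complex.cpow_nat_mul, div_eq_mul_inv, ← inv_pow, pow_succ']
    ring
  have hgeo : ∀ p : Nat.Primes, ∑' k, f ((p:ℕ)^(k+1)) = (Real.log p : ℂ) / ((p:ℂ)^w - 1) := by
    intro p
    simp_rw [hterm]
    have hq := prime_q_gt p (by linarith : 0 < w.re)
    have hq0 : (p:ℂ)^w ≠ 0 := by intro h; rw [h] at hq; simp at hq; linarith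
    have hq1 : (p:ℂ)^w - 1 ≠ 0 := by intro h; rw [sub_eq_zero.1 h] at hq; simp at hq
    rw [tsum_mul_left, tsum_geometric_of_norm_lt_one (by rw [norm_inv]; exact inv_lt_one_of_one_lt₀ hq)]
    have : 1 - ((p:ℂ)^w)⁻¹ ≠ 0 := by
      rw [sub_ne_zero]; intro h; apply hq1; rw [sub_eq_zero]; exact (inv_eq_one.1 h.symm)
    field_simp
  have hsumm : Summable (fun p : Nat.Primes => (Real.log p : ℂ) / ((p:ℂ)^w - 1)) := by
    simp_rw [← hgeo]
    refine (hsm'.comp_injective (i := fun pk : Nat.Primes × ℕ => (pk.1:ℕ)^(pk.2+1)) ?_).prod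
    have := Subtype.val_injective.comp Nat.Primes.prodNatEquiv.injective
    exact this
  have h2 : ∑' n, f n = - deriv riemannZeta w / riemannZeta w := hL
  rw [h1] at h2
  simp_rw [hgeo] at h2
  rw [← h2]; exact hsumm.hasSum

noncomputable def ind (n : ℕ) : ℝ := if n.Prime then 1 else 0

lemma ind_nonneg (n : ℕ) : 0 ≤ ind n := by unfold ind; split_ifs <;> norm_num

lemma ind_bigO : (fun n ↦ ∑ k ∈ Finset.Icc 1 n, ind k) =O[atTop] fun n ↦ (n : ℝ) ^ (1:ℝ) := by
  refine Asymptotics.IsBigO.of_bound 1 (Eventually.of_forall fun n => ?_)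
  rw [Real.norm_of_nonneg (Finset.sum_nonneg fun k _ => ind_nonneg k), Real.rpow_one, one_mul,
    Real.norm_of_nonneg (by positivity)]
  calc ∑ k ∈ Finset.Icc 1 n, ind k ≤ ∑ k ∈ Finset.Icc 1 n, (1:ℝ) := by
        apply Finset.sum_le_sum; intro k _; unfold ind; split_ifs <;> norm_num
    _ = n := by simp

lemma ind_summable {s : ℂ} (hs : 1 < s.re) : LSeriesSummable (fun n => (ind n : ℂ)) s :=
  LSeriesSummable_of_sum_norm_bigO_and_nonneg ind_bigO ind_nonneg zero_le_one hs

lemma ind_absc {s : ℂ} (hs : 1 < s.re) : LSeries.abscissaOfAbsConv (fun n => (ind n : ℂ)) < s.re := by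
  have h : LSeries.abscissaOfAbsConv (fun n => (ind n : ℂ)) ≤ (1:ℝ) :=
    LSeries.abscissaOfAbsConv_le_of_forall_lt_LSeriesSummable fun y hy =>
      ind_summable (by simpa using hy)
  exact lt_of_le_of_lt h (by exact_mod_cast hs)

lemma hasSum_B {s : ℂ} (hs : 1 < s.re) :
    HasSum (fun p : Nat.Primes => (Real.log p : ℂ) / ((p:ℂ)^s)) (LSeries (LSeries.logMul (fun n => (ind n : ℂ))) s) := by
  have h := (LSeriesSummable_logMul_of_lt_re (ind_absc hs)).hasSum
  have h2 := (hasSum_subtype_iff_of_support_subset (s := {n : ℕ | n.Prime}) (f := LSeries.term (LSeries.logMul (fun n => (ind n : ℂ))) s)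
    (a := LSeries (LSeries.logMul (fun n => (ind n : ℂ))) s) ?_).2 h
  · have e : (fun p : Nat.Primes => (Real.log p : ℂ) / ((p:ℂ)^s)) =
        (LSeries.term (LSeries.logMul (fun n => (ind n : ℂ))) s) ∘ (Subtype.val : {n : ℕ | n.Prime} → ℕ) := by
      ext p
      have hp : Nat.Prime (p:ℕ) := p.2
      show _ = LSeries.term (LSeries.logMul (fun n => (ind n : ℂ))) s (p:ℕ)
      rw [LSeries.term_of_ne_zero hp.ne_zero]
      simp [LSeries.logMul, ind, hp, Complex.natCast_log]
    rw [e]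
    exact h2
  · intro n hn
    by_contra hc
    apply hn
    have : ¬ n.Prime := hc
    rw [LSeries.term_def]
    simp [LSeries.logMul, ind, this]

noncomputable def Hh (s : ℂ) : ℂ := ∑' p : Nat.Primes, (Real.log p : ℂ) / ((p:ℂ)^s * (((p:ℂ)^s)^2 - 1))

lemma prime_identity {s : ℂ} (hs : 1 < s.re) :
    - LSeries (LSeries.logMul (fun n => (ind n : ℂ))) s =
      deriv riemannZeta s / riemannZeta s - deriv riemannZeta (2*s) / riemannZeta (2*s) + Hh s := by
  have hA := hasSum_A hs
  have hB := hasSum_B hs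
  have hC := hasSum_A (w := 2*s) (by simp; linarith)
  have hH := ((hA.sub hB).sub hC).tsum_eq
  have : Hh s = ∑' p : Nat.Primes, ((Real.log p : ℂ) / ((p:ℂ)^s - 1) - (Real.log p : ℂ) / ((p:ℂ)^s)
      - (Real.log p : ℂ) / ((p:ℂ)^(2*s) - 1)) := by
    unfold Hh
    refine tsum_congr fun p => ?_
    have hq := prime_q_gt p (by linarith : 0 < s.re)
    have e : (p:ℂ)^(2*s) = ((p:ℂ)^s)^2 := by
      have := Complex.cpow_nat_mul (p:ℂ) 2 s
      exact_mod_cast this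
    rw [e]
    set q := (p:ℂ)^s
    have hq0 : q ≠ 0 := by intro h; rw [h] at hq; simp at hq; linarith
    have hq1 : q - 1 ≠ 0 := by intro h; rw [sub_eq_zero.1 h] at hq; simp at hq
    have hq2 : q + 1 ≠ 0 := by
      intro h; rw [eq_neg_of_add_eq_zero_left h] at hq; simp at hq
    have e2 : q^2 - 1 = (q-1)*(q+1) := by ring
    rw [e2]
    field_simp
    ring
  rw [this, hH]
  ring

lemma Hh_diff : DifferentiableOn ℂ Hh {s | 2/5 < s.re} := by
  have hop : IsOpen {s : ℂ | 2/5 < s.re} := isOpen_lt continuous_const Complex.continuous_re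
  let c : ℝ := 1 - (2:ℝ)^(-(4/5:ℝ))
  have hc : 0 < c := by
    have : (2:ℝ)^(-(4/5:ℝ)) < 1 := Real.rpow_lt_one_of_one_lt_of_neg (by norm_num) (by norm_num)
    simp only [c]; linarith
  have hu : Summable (fun p : Nat.Primes => (10 / c) * (p:ℝ)^(-(11/10):ℝ)) := by
    refine Summable.mul_left _ ?_
    exact (Nat.Primes.summable_rpow).2 (by norm_num)
  refine differentiableOn_tsum_of_summable_norm hu ?_ hop ?_
  · intro p s hs
    have hs' : 0 < s.re := lt_trans (by norm_num) hs
    have hq := prime_q_gt p hs'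
    have hp0 : (p:ℂ) ≠ 0 := by exact_mod_cast p.2.ne_zero
    have hd : DifferentiableAt ℂ (fun s : ℂ => (p:ℂ)^s) s :=
      (differentiableAt_id).const_cpow (Or.inl hp0)
    refine DifferentiableAt.differentiableWithinAt ?_
    refine DifferentiableAt.div (differentiableAt_const _) (hd.mul ((hd.pow 2).sub_const 1)) ?_
    refine mul_ne_zero ?_ ?_
    · intro h; rw [h] at hq; simp at hq; linarith
    · intro h
      have := congrArg norm (sub_eq_zero.1 h)
      rw [norm_pow, norm_one] at this
      nlinarith
  · intro p s hs
    have hs' : 2/5 < s.re := hs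
    have hp2 : (2:ℝ) ≤ p := by exact_mod_cast p.2.two_le
    have hp0 : (0:ℝ) < p := by linarith
    have hq : (p:ℝ)^(2/5:ℝ) ≤ ‖(p:ℂ)^s‖ := by
      rw [prime_q_norm]; exact Real.rpow_le_rpow_of_exponent_le (by linarith) hs'.le
    have hx0 : 0 < (p:ℝ)^(2/5:ℝ) := Real.rpow_pos_of_pos hp0 _
    have hx2 : ((p:ℝ)^(2/5:ℝ))^2 = (p:ℝ)^(4/5:ℝ) := by
      rw [← Real.rpow_natCast, ← Real.rpow_mul hp0.le]; norm_num
    have h2 : c * (p:ℝ)^(4/5:ℝ) ≤ ‖((p:ℂ)^s)^2 - 1‖ := by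
      have h3 : ‖((p:ℂ)^s)^2‖ - ‖(1:ℂ)‖ ≤ ‖((p:ℂ)^s)^2 - 1‖ := norm_sub_norm_le _ _
      rw [norm_pow, norm_one] at h3
      have h4 : (p:ℝ)^(4/5:ℝ) ≤ ‖(p:ℂ)^s‖^2 := by
        rw [← hx2]; exact pow_le_pow_left₀ hx0.le hq 2
      have h5 : 1 ≤ (2:ℝ)^(-(4/5:ℝ)) * (p:ℝ)^(4/5:ℝ) := by
        rw [Real.rpow_neg (by norm_num), inv_mul_eq_div, one_le_div (by positivity)]
        exact Real.rpow_le_rpow (by norm_num) hp2 (by norm_num)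
      have : c * (p:ℝ)^(4/5:ℝ) = (p:ℝ)^(4/5:ℝ) - (2:ℝ)^(-(4/5:ℝ)) * (p:ℝ)^(4/5:ℝ) := by
        simp only [c]; ring
      linarith
    have hlog : Real.log p ≤ 10 * (p:ℝ)^(1/10:ℝ) := by
      have := Real.log_le_rpow_div hp0.le (by norm_num : (0:ℝ) < 1/10)
      linarith
    have hlog0 : 0 ≤ Real.log p := Real.log_nonneg (by linarith)
    rw [norm_div, norm_mul, Complex.norm_real, Real.norm_of_nonneg hlog0]
    have hy0 : 0 < (p:ℝ)^(4/5:ℝ) := Real.rpow_pos_of_pos hp0 _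
    calc Real.log p / (‖(p:ℂ)^s‖ * ‖((p:ℂ)^s)^2 - 1‖) 
        ≤ (10 * (p:ℝ)^(1/10:ℝ)) / ((p:ℝ)^(2/5:ℝ) * (c * (p:ℝ)^(4/5:ℝ))) := by
          gcongr
      _ = (10 / c) * ((p:ℝ)^(1/10:ℝ) / ((p:ℝ)^(2/5:ℝ) * (p:ℝ)^(4/5:ℝ))) := by
          field_simp
      _ = _ := by
          rw [← Real.rpow_add hp0, ← Real.rpow_sub hp0]; norm_num

lemma primePi_eq (t : ℝ) (ht : 0 ≤ t) : (primePi t : ℝ) = ∑ k ∈ Finset.Icc 1 ⌊t⌋₊, ind k := by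
  unfold ind
  rw [Finset.sum_ite]
  simp only [Finset.sum_const_zero, add_zero, Finset.sum_const, nsmul_eq_mul, mul_one]
  congr 1
  unfold primePi
  have : {p : ℕ | p.Prime ∧ (p : ℝ) ≤ t} = ((Finset.Icc 1 ⌊t⌋₊).filter Nat.Prime : Finset ℕ) := by
    ext p
    simp only [Finset.coe_filter, Finset.mem_Icc]
    constructor
    · rintro ⟨h1, h2⟩
      exact ⟨⟨h1.one_le, Nat.le_floor h2⟩, h1⟩
    · rintro ⟨⟨_, h2⟩, h1⟩
      exact ⟨h1, (Nat.le_floor_iff ht).1 h2⟩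
  rw [this, Nat.card_coe_set_eq, Set.ncard_coe_finset]

end LW
end

section
namespace LW
open Complex Topology MeasureTheory

noncomputable def R0 (s : ℂ) : ℂ :=
  dslope (fun s : ℂ => (2:ℂ)^(1-s)) 1 s - deriv Zt (2*s) / Zt (2*s) + Hh s
noncomputable def RR (ε C x0 : ℝ) (s : ℂ) : ℂ :=
  ε * (R0 s + 1/(2*s-1)) + C * (Real.log 2 * (2:ℂ)^(-s) - Real.log x0 * (x0:ℂ)^(-s))

lemma zeta_logderiv {w : ℂ} (hw : w ≠ 1) (hz : riemannZeta w ≠ 0) :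
    deriv riemannZeta w / riemannZeta w = deriv Zt w / Zt w - 1/(w-1) := by
  have hw' : w - 1 ≠ 0 := sub_ne_zero.2 hw
  have h1 : deriv Zt w = 1 * riemannZeta w + (w-1) * deriv riemannZeta w := by
    have hd : HasDerivAt (fun s => (s-1)*riemannZeta s) (1 * riemannZeta w + (w-1) * deriv riemannZeta w) w :=
      ((hasDerivAt_id w).sub_const 1).mul (differentiableAt_riemannZeta hw).hasDerivAt
    have he : Zt =ᶠ[𝓝 w] fun s => (s-1)*riemannZeta s := by
      filter_upwards [isOpen_ne.mem_nhds hw] with s hs using Zt_of_ne hs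
    rw [he.deriv_eq, hd.deriv]
  rw [h1, Zt_of_ne hw]
  field_simp
  ring

lemma two_cpow_diff : Differentiable ℂ (fun s : ℂ => (2:ℂ)^(1-s)) := by
  intro s
  exact ((differentiableAt_const 1).sub differentiableAt_id).const_cpow (Or.inl two_ne_zero)

lemma R0_diffAt {s : ℂ} (hs : 1/2 ≤ s.re) : DifferentiableAt ℂ R0 s := by
  unfold R0
  have h1 : DifferentiableAt ℂ (dslope (fun s : ℂ => (2:ℂ)^(1-s)) 1) s := by
    have := (Complex.differentiableOn_dslope (s := univ) (c := (1:ℂ)) (f := fun s : ℂ => (2:ℂ)^(1-s)) univ_mem).2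
      two_cpow_diff.differentiableOn
    exact this.differentiableAt univ_mem
  have hd : Differentiable ℂ (deriv Zt) := by
    intro z; exact (Zt_differentiable.differentiableOn.deriv isOpen_univ).differentiableAt univ_mem
  have h2 : DifferentiableAt ℂ (fun s => deriv Zt (2*s) / Zt (2*s)) s := by
    have e : DifferentiableAt ℂ (fun s : ℂ => 2*s) s := by fun_prop
    refine DifferentiableAt.div ((hd _).comp s e) ((Zt_differentiable _).comp s e) ?_
    apply Zt_ne_zero_of_one_le
    simp; linarith
  have h3 : DifferentiableAt ℂ Hh s :=
    Hh_diff.differentiableAt ((isOpen_lt continuous_const Complex.continuous_re).mem_nhds (by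
      show (2/5:ℝ) < s.re; linarith))
  exact (h1.sub h2).add h3

lemma extra_diff {x0 : ℝ} (hx0 : 0 < x0) (C : ℝ) : Differentiable ℂ
    (fun s : ℂ => (C:ℂ) * (Real.log 2 * (2:ℂ)^(-s) - Real.log x0 * (x0:ℂ)^(-s))) := by
  intro s
  have h1 : DifferentiableAt ℂ (fun s : ℂ => (2:ℂ)^(-s)) s :=
    differentiableAt_id.neg.const_cpow (Or.inl two_ne_zero)
  have h2 : DifferentiableAt ℂ (fun s : ℂ => (x0:ℂ)^(-s)) s :=
    differentiableAt_id.neg.const_cpow (Or.inl (by exact_mod_cast hx0.ne'))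
  fun_prop

lemma RR_diff {ε C x0 : ℝ} (hx0 : 0 < x0) : DifferentiableOn ℂ (RR ε C x0) {s | 1/2 < s.re} := by
  intro s hs
  have hs' : 1/2 < s.re := hs
  refine DifferentiableAt.differentiableWithinAt ?_
  unfold RR
  refine DifferentiableAt.add ?_ (extra_diff hx0 C s)
  refine DifferentiableAt.const_mul (DifferentiableAt.add (R0_diffAt hs'.le) ?_) _
  refine DifferentiableAt.div (by fun_prop) (by fun_prop) ?_
  intro h
  have := congrArg Complex.re h
  simp at this; linarith

lemma RR_lim {ε C x0 : ℝ} (hx0 : 0 < x0) (l : ℝ) :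
    Tendsto (fun σ : ℝ => (σ:ℂ) * RR ε C x0 (1/2 + σ + l*I)) (𝓝[>] 0)
      (𝓝 (ε * (if l = 0 then 1/2 else 0))) := by
  have hmap : ContinuousAt (fun σ : ℝ => (1/2 + σ + l*I : ℂ)) 0 := by fun_prop
  have h1 : Tendsto (fun σ : ℝ => (σ:ℂ) * (ε * R0 (1/2 + σ + l*I) + 
      C * (Real.log 2 * (2:ℂ)^(-(1/2 + σ + l*I : ℂ)) - Real.log x0 * (x0:ℂ)^(-(1/2 + σ + l*I : ℂ))))) (𝓝[>] 0) (𝓝 0) := by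
    have hc1 : ContinuousAt (fun σ : ℝ => R0 (1/2 + σ + l*I)) 0 := by
      refine ContinuousAt.comp (f := fun σ : ℝ => (1/2 + σ + l*I : ℂ)) (R0_diffAt ?_).continuousAt hmap
      simp
    have hc2 := ((extra_diff hx0 C).continuous.continuousAt
      (x := (1/2 + ((0:ℝ):ℂ) + l*I : ℂ))).comp (f := fun σ : ℝ => (1/2 + σ + l*I : ℂ)) hmap
    have hc3 : ContinuousAt (fun σ : ℝ => (σ:ℂ)) 0 := Complex.continuous_ofReal.continuousAt
    have := (hc3.mul ((continuousAt_const (y := (ε:ℂ))).mul hc1 |>.add hc2)).tendsto.mono_left (nhdsWithin_le_nhds (s := Ioi 0))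
    convert this using 2
    · rfl
    · show (0:ℂ) = ((0:ℝ):ℂ) * _
      rw [Complex.ofReal_zero, zero_mul]
  have h2 : Tendsto (fun σ : ℝ => (ε:ℂ) * ((σ:ℂ) / (2*(1/2 + σ + l*I) - 1))) (𝓝[>] 0)
      (𝓝 (ε * (if l = 0 then 1/2 else 0))) := by
    refine Tendsto.const_mul _ ?_
    split_ifs with hl
    · subst hl
      refine tendsto_const_nhds.congr' ?_
      filter_upwards [self_mem_nhdsWithin] with σ hσ
      have : (σ:ℂ) ≠ 0 := by exact_mod_cast (ne_of_gt hσ)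
      have e : 2*(1/2 + (σ:ℂ) + ((0:ℝ):ℂ)*I) - 1 = 2 * σ := by push_cast; ring
      rw [e]; field_simp
    · have hc : ContinuousAt (fun σ : ℝ => (σ:ℂ) / (2*(1/2 + σ + l*I) - 1)) 0 := by
        refine ContinuousAt.div (by fun_prop) (by fun_prop) ?_
        intro h
        have := congrArg Complex.im h
        simp at this; exact hl this
      have := hc.tendsto.mono_left (nhdsWithin_le_nhds (s := Ioi 0))
      simpa using this
  have := h1.add h2
  rw [zero_add] at this
  refine this.congr fun σ => ?_
  unfold RR; ring

lemma RR_identity {ε C x0 : ℝ} {s : ℂ} (hs : 1 < s.re) :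
    Zt s * (ε * (-(2:ℂ)^(1-s) / (s-1) + LSeries (LSeries.logMul (fun n => (ind n : ℂ))) s) 
      + C * (- Real.log 2 * (2:ℂ)^(-s) + Real.log x0 * (x0:ℂ)^(-s)))
      = - (ε * deriv Zt s + Zt s * RR ε C x0 s) := by
  have h1 := prime_identity hs
  have hs1 : s ≠ 1 := by rintro rfl; simp at hs
  have hs2 : 2*s ≠ 1 := by intro h; have := congrArg Complex.re h; simp at this; linarith
  rw [zeta_logderiv hs1 (riemannZeta_ne_zero_of_one_le_re hs.le), 
    zeta_logderiv hs2 (riemannZeta_ne_zero_of_one_le_re (by simp; linarith))] at h1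
  have h2 : dslope (fun s : ℂ => (2:ℂ)^(1-s)) 1 s = ((2:ℂ)^(1-s) - 1)/(s-1) := by
    rw [dslope_of_ne _ hs1, slope_def_field]; simp
  have hZ : Zt s ≠ 0 := Zt_ne_zero_of_one_le hs.le
  have e : ε * deriv Zt s = Zt s * (ε * (deriv Zt s / Zt s)) := by field_simp
  rw [e, ← mul_add, ← mul_neg]
  congr 1
  unfold RR R0
  rw [h2, sub_div]
  linear_combination (-(ε:ℂ)) * h1

end LW
end

section
namespace LW
open Complex Topology MeasureTheory ProbabilityTheory

lemma log_pos2 {x : ℝ} (hx : 2 ≤ x) : 0 < Real.log x := Real.log_pos (by linarith)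

lemma Li_ii {a b : ℝ} (ha : 1 < a) (hb : 1 < b) :
    IntervalIntegrable (fun t => 1 / Real.log t) volume a b := by
  apply ContinuousOn.intervalIntegrable
  intro x hx
  have h1 : 1 < x := lt_of_lt_of_le (lt_min ha hb) hx.1
  have := Real.log_pos h1
  exact ((continuousAt_const).div (Real.continuousAt_log (by linarith)) this.ne').continuousWithinAt

lemma Li_hasDerivAt {x : ℝ} (hx : 1 < x) : HasDerivAt Li (1 / Real.log x) x := by
  have hc : ContinuousOn (fun t => 1 / Real.log t) (Ioi 1) := by
    intro y hy
    have := Real.log_pos (show (1:ℝ) < y from hy)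
    have hy' : (1:ℝ) < y := hy
    exact ((continuousAt_const).div (Real.continuousAt_log (by linarith)) this.ne').continuousWithinAt
  have := intervalIntegral.integral_hasDerivAt_right (Li_ii (by norm_num : (1:ℝ) < 2) hx)
    (hc.stronglyMeasurableAtFilter isOpen_Ioi x hx)
    ((hc x hx).continuousAt (Ioi_mem_nhds hx))
  exact this

lemma Li_nonneg {x : ℝ} (hx : 2 ≤ x) : 0 ≤ Li x := by
  unfold Li
  apply intervalIntegral.integral_nonneg hx
  intro u hu
  have := log_pos2 hu.1
  positivity

lemma Li_le {x : ℝ} (hx : 2 ≤ x) : Li x ≤ x / Real.log 2 := by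
  unfold Li
  have h2 := log_pos2 (le_refl 2)
  have : ∫ t in (2:ℝ)..x, 1 / Real.log t ≤ ∫ t in (2:ℝ)..x, 1 / Real.log 2 := by
    apply intervalIntegral.integral_mono_on hx (Li_ii (by norm_num) (by linarith)) (by simp)
    intro u hu
    apply one_div_le_one_div_of_le h2
    exact Real.log_le_log (by norm_num) hu.1
  refine this.trans ?_
  rw [intervalIntegral.integral_const, smul_eq_mul, mul_one_div]
  gcongr
  linarith

lemma Li_cont : ContinuousOn Li (Ioi 2) := fun x hx =>
  (Li_hasDerivAt (by have : (2:ℝ) < x := hx; linarith)).continuousAt.continuousWithinAt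

/-- counting function as a sum -/
noncomputable def Pp (t : ℝ) : ℝ := ∑ k ∈ Finset.Icc 1 ⌊t⌋₊, ind k

lemma Pp_meas : Measurable Pp := by
  have : Measurable (fun n : ℕ => ∑ k ∈ Finset.Icc 1 n, ind k) := measurable_from_top
  exact this.comp Nat.measurable_floor

lemma Pp_nonneg (t : ℝ) : 0 ≤ Pp t := Finset.sum_nonneg fun k _ => ind_nonneg k

lemma Pp_le {t : ℝ} (ht : 0 ≤ t) : Pp t ≤ t := by
  calc Pp t ≤ ∑ k ∈ Finset.Icc 1 ⌊t⌋₊, (1:ℝ) := by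
        apply Finset.sum_le_sum; intro k _; unfold ind; split_ifs <;> norm_num
    _ = ⌊t⌋₊ := by simp
    _ ≤ t := Nat.floor_le ht

lemma Pp_zero {t : ℝ} (ht : t < 2) : Pp t = 0 := by
  apply Finset.sum_eq_zero
  intro k hk
  have h1 : ⌊t⌋₊ < 2 := by
    rw [Nat.floor_lt' (by norm_num)]; exact_mod_cast ht
  have := (Finset.mem_Icc.1 hk)
  have hk : k = 1 := by omega
  subst hk
  simp [ind, Nat.not_prime_one]

/-- measure with density -/
noncomputable def dens (d : ℝ → ℝ) : Measure ℝ :=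
  (volume.restrict (Ioi (2:ℝ))).withDensity (fun x => ENNReal.ofReal (d x))

lemma dens_integral {d : ℝ → ℝ} (hd : AEMeasurable d (volume.restrict (Ioi (2:ℝ))))
    (h0 : ∀ x > 2, 0 ≤ d x) (f : ℝ → ℂ) : ∫ x, f x ∂(dens d) = ∫ x in Ioi (2:ℝ), (d x : ℂ) * f x := by
  unfold dens
  rw [integral_withDensity_eq_integral_toReal_smul₀ hd.ennreal_ofReal (by simp)]
  apply setIntegral_congr_fun measurableSet_Ioi
  intro x hx
  simp [ENNReal.toReal_ofReal (h0 x hx)]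

lemma dens_Y (d : ℝ → ℝ) : ∀ᵐ x ∂(dens d), - Real.log x ≤ 0 := by
  have h : ∀ᵐ x ∂(volume.restrict (Ioi (2:ℝ))), - Real.log x ≤ 0 := by
    filter_upwards [ae_restrict_mem measurableSet_Ioi] with x hx
    have := log_pos2 (le_of_lt hx)
    linarith
  exact (withDensity_absolutelyContinuous _ _).ae_le h

lemma dens_exp {d : ℝ → ℝ} (hd : AEMeasurable d (volume.restrict (Ioi (2:ℝ)))) {K : ℝ}
    (h0 : ∀ x > 2, 0 ≤ d x) (hK : ∀ x > 2, d x ≤ K) (σ : ℝ) (hσ : 1 < σ) :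
    σ ∈ integrableExpSet (fun x => - Real.log x) (dens d) := by
  show Integrable _ _
  unfold dens
  rw [integrable_withDensity_iff_integrable_smul₀' hd.ennreal_ofReal (by simp)]
  have hi : Integrable (fun x : ℝ => K * x ^ (-σ)) (volume.restrict (Ioi (2:ℝ))) :=
    (integrableOn_Ioi_rpow_of_lt (by linarith) (by norm_num)).const_mul K
  refine hi.mono' ?_ ?_
  · refine (hd.ennreal_ofReal.ennreal_toReal.smul ?_).aestronglyMeasurable
    exact (Real.measurable_exp.comp (Real.measurable_log.neg.const_mul σ)).aemeasurable
  · filter_upwards [ae_restrict_mem measurableSet_Ioi] with x hx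
    have hx' : (2:ℝ) < x := hx
    have h1 := h0 x hx
    rw [smul_eq_mul, ENNReal.toReal_ofReal h1, Real.norm_of_nonneg (by positivity),
      Real.rpow_def_of_pos (by linarith)]
    rw [show σ * -Real.log x = Real.log x * -σ by ring]
    gcongr
    exact hK x hx

lemma cexp_log {x : ℝ} (hx : 0 < x) (s : ℂ) : cexp (s * ((-Real.log x : ℝ) : ℂ)) = (x:ℂ) ^ (-s) := by
  rw [Complex.cpow_def_of_ne_zero (by exact_mod_cast hx.ne'), ← Complex.ofReal_log hx.le]
  congr 1; push_cast; ring

/-- derivative of the Mellin transform of `1/log` -/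
noncomputable def AA (s : ℂ) : ℂ := ∫ x in Ioi (2:ℝ), (x:ℂ) ^ (-s) / (Real.log x : ℂ)

lemma ilog_aem : AEMeasurable (fun x => 1 / Real.log x) (volume.restrict (Ioi (2:ℝ))) :=
  (measurable_const.div Real.measurable_log).aemeasurable

lemma ilog_nonneg : ∀ x > (2:ℝ), 0 ≤ 1 / Real.log x := fun x hx => by
  have := log_pos2 (le_of_lt hx); positivity

lemma ilog_le : ∀ x > (2:ℝ), 1 / Real.log x ≤ 1 / Real.log 2 := fun x hx => by
  apply one_div_le_one_div_of_le (log_pos2 le_rfl)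
  exact Real.log_le_log (by norm_num) hx.le

lemma AA_eq : AA = complexMGF (fun x => - Real.log x) (dens (fun x => 1 / Real.log x)) := by
  funext s
  unfold AA complexMGF
  rw [dens_integral ilog_aem ilog_nonneg]
  apply setIntegral_congr_fun measurableSet_Ioi
  intro x hx
  have hx' : (2:ℝ) < x := hx
  show _ = _ * cexp (s * ((-Real.log x : ℝ):ℂ))
  rw [cexp_log (by linarith)]
  push_cast
  ring

lemma AA_deriv {s : ℂ} (hs : 1 < s.re) : HasDerivAt AA (-(2:ℂ)^(1-s)/(s-1)) s := by
  rw [AA_eq]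
  have h := hasDerivAt_complexMGF (z := s)
    (Ioi_sub_interior (dens_exp ilog_aem ilog_nonneg ilog_le) hs)
  convert h using 1
  rw [dens_integral ilog_aem ilog_nonneg]
  have : ∫ x in Ioi (2:ℝ), ((1 / Real.log x : ℝ) : ℂ) * (((-Real.log x : ℝ):ℂ) * cexp (s * ((-Real.log x : ℝ):ℂ)))
     = ∫ x in Ioi (2:ℝ), - (x:ℂ)^(-s) := by
    apply setIntegral_congr_fun measurableSet_Ioi
    intro x hx
    have hx' : (2:ℝ) < x := hx
    have hl : (Real.log x : ℂ) ≠ 0 := by exact_mod_cast (log_pos2 hx'.le).ne'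
    simp only
    rw [cexp_log (by linarith)]
    push_cast
    field_simp
  rw [this, integral_neg, integral_Ioi_cpow_of_lt (by simpa using hs) (by norm_num)]
  have h1 : s - 1 ≠ 0 := by
    intro h; rw [sub_eq_zero] at h; rw [h] at hs; simp at hs
  have h2 : -s + 1 ≠ 0 := by
    intro h; apply h1; linear_combination -h
  rw [show (1 - s) = -s + 1 by ring]
  push_cast
  rw [← neg_div, neg_neg, div_eq_div_iff h1 h2]
  ring

lemma norm_cpow_x {x : ℝ} (hx : 0 < x) (s : ℂ) : ‖(x:ℂ)^s‖ = x ^ s.re :=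
  Complex.norm_cpow_eq_rpow_re_of_pos hx s

lemma bd_integrable {f : ℝ → ℝ} (hf : AEMeasurable f (volume.restrict (Ioi (2:ℝ)))) {K : ℝ}
    (hK : ∀ x > 2, |f x| ≤ K * x) {s : ℂ} (hs : 1 < s.re) :
    IntegrableOn (fun x : ℝ => (f x : ℂ) * (x:ℂ)^(-(s+1))) (Ioi 2) := by
  have hi : Integrable (fun x : ℝ => K * x ^ (-s.re)) (volume.restrict (Ioi (2:ℝ))) :=
    (integrableOn_Ioi_rpow_of_lt (by linarith) (by norm_num)).const_mul K
  refine hi.mono' ?_ ?_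
  · refine AEStronglyMeasurable.mul ?_ ?_
    · exact (Complex.measurable_ofReal.comp_aemeasurable hf).aestronglyMeasurable
    · exact (integrableOn_Ioi_cpow_of_lt (by simp; linarith) (by norm_num)).aestronglyMeasurable
  · filter_upwards [ae_restrict_mem measurableSet_Ioi] with x hx
    have hx' : (2:ℝ) < x := hx
    have h0 : 0 < x := by linarith
    rw [norm_mul, norm_cpow_x h0, Complex.norm_real, Real.norm_eq_abs]
    have : (-(s+1)).re = -s.re - 1 := by simp; ring
    rw [this, Real.rpow_sub h0, Real.rpow_one]
    calc |f x| * (x ^ (-s.re) / x) ≤ (K * x) * (x ^ (-s.re) / x) := by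
          gcongr; exact hK x hx
      _ = K * x ^ (-s.re) := by field_simp

lemma Li_aem : AEMeasurable Li (volume.restrict (Ioi (2:ℝ))) :=
  Li_cont.aemeasurable measurableSet_Ioi

lemma Li_bd : ∀ x > (2:ℝ), |Li x| ≤ (1 / Real.log 2) * x := fun x hx => by
  rw [abs_of_nonneg (Li_nonneg hx.le)]
  have := Li_le hx.le
  rw [div_mul_eq_mul_div, one_mul]; exact this

lemma Li_mellin {s : ℂ} (hs : 1 < s.re) :
    s * ∫ x in Ioi (2:ℝ), (Li x : ℂ) * (x:ℂ)^(-(s+1)) = AA s := by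
  have hs0 : s ≠ 0 := by intro h; rw [h] at hs; simp at hs; linarith
  have hI1 := bd_integrable Li_aem Li_bd hs
  have hI2 : IntegrableOn (fun x : ℝ => (x:ℂ) ^ (-s) / (Real.log x : ℂ)) (Ioi 2) := by
    have hi : Integrable (fun x : ℝ => (1 / Real.log 2) * x ^ (-s.re)) (volume.restrict (Ioi (2:ℝ))) :=
      (integrableOn_Ioi_rpow_of_lt (by linarith) (by norm_num)).const_mul _
    refine hi.mono' ?_ ?_
    · simp_rw [div_eq_mul_inv]
      refine AEStronglyMeasurable.mul ?_ ?_
      · exact (integrableOn_Ioi_cpow_of_lt (by simp; linarith) (by norm_num)).aestronglyMeasurable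
      · exact (Complex.measurable_ofReal.comp Real.measurable_log).inv.aestronglyMeasurable
    · filter_upwards [ae_restrict_mem measurableSet_Ioi] with x hx
      have hx' : (2:ℝ) < x := hx
      have h0 : 0 < x := by linarith
      have hl := log_pos2 hx'.le
      rw [norm_div, norm_cpow_x h0, Complex.norm_real, Real.norm_eq_abs, abs_of_pos hl, Complex.neg_re,
        div_eq_mul_one_div, mul_comm]
      gcongr ?_ * _
      exact ilog_le x hx
  have hd : ∀ x ∈ Ici (2:ℝ), HasDerivAt (fun x : ℝ => (Li x : ℂ) * (x:ℂ)^(-s))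
      ((x:ℂ) ^ (-s) / (Real.log x : ℂ) - s * ((Li x : ℂ) * (x:ℂ)^(-(s+1)))) x := by
    intro x hx
    have hx' : (2:ℝ) ≤ x := hx
    have h1 := (Li_hasDerivAt (by linarith : 1 < x)).ofReal_comp
    have h3 : HasDerivAt (fun y : ℝ => (y:ℂ)^(-s)) (-s * (x:ℂ)^(-s-1)) x :=
      hasDerivAt_ofReal_cpow_const (by linarith) (neg_ne_zero.2 hs0)
    refine (h1.mul h3).congr_deriv ?_
    rw [show -(s+1) = -s-1 by ring]
    push_cast
    ring
  have hlim : Tendsto (fun x : ℝ => (Li x : ℂ) * (x:ℂ)^(-s)) atTop (𝓝 0) := by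
    have h0 : Tendsto (fun x : ℝ => (1 / Real.log 2) * x ^ (-(s.re - 1))) atTop (𝓝 0) := by
      simpa using (tendsto_rpow_neg_atTop (by linarith : 0 < s.re - 1)).const_mul (1 / Real.log 2)
    refine squeeze_zero_norm' ?_ h0
    filter_upwards [eventually_gt_atTop 2] with x hx
    have hx0 : 0 < x := by linarith
    rw [norm_mul, norm_cpow_x hx0, Complex.norm_real, Real.norm_eq_abs]
    calc |Li x| * x ^ (-s).re ≤ (1 / Real.log 2 * x) * x ^ (-s).re := by
          gcongr; exact Li_bd x hx
      _ = _ := by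
          rw [show -(s.re - 1) = 1 + (-s).re by simp; ring, Real.rpow_add hx0, Real.rpow_one]; ring
  have h := integral_Ioi_of_hasDerivAt_of_tendsto' hd (hI2.sub (hI1.const_mul s)) hlim
  rw [integral_sub hI2 (hI1.const_mul s), integral_const_mul] at h
  have hL2 : Li 2 = 0 := by simp [Li]
  rw [hL2] at h
  simp at h
  unfold AA
  have h' := sub_eq_zero.1 h
  rw [h', show -(s+1) = -1 + -s by ring]

lemma Pp_mellin {s : ℂ} (hs : 1 < s.re) :
    s * ∫ x in Ioi (2:ℝ), (Pp x : ℂ) * (x:ℂ)^(-(s+1)) = LSeries (fun n => (ind n : ℂ)) s := by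
  rw [LSeries_eq_mul_integral_of_nonneg ind (r := 1) zero_le_one hs ind_bigO ind_nonneg]
  congr 1
  have e : ∀ t : ℝ, (∑ k ∈ Finset.Icc 1 ⌊t⌋₊, (ind k : ℂ)) = (Pp t : ℂ) := by
    intro t; unfold Pp; push_cast; rfl
  simp_rw [e]
  have hsub : Ici (2:ℝ) ⊆ Ioi 1 := fun x hx => by
    have : (2:ℝ) ≤ x := hx
    show (1:ℝ) < x
    linarith
  rw [← integral_Ici_eq_integral_Ioi]
  symm
  apply setIntegral_eq_of_subset_of_forall_sdiff_eq_zero measurableSet_Ioi hsub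
  intro x hx
  rw [Pp_zero (not_le.1 hx.2)]
  simp

lemma const_mellin {x0 : ℝ} (hx0 : 2 ≤ x0) {s : ℂ} (hs : 1 < s.re) :
    s * ∫ x in Ioc (2:ℝ) x0, (x:ℂ)^(-(s+1)) = (2:ℂ)^(-s) - (x0:ℂ)^(-s) := by
  have hs0 : s ≠ 0 := by intro h; rw [h] at hs; simp at hs; linarith
  rw [← intervalIntegral.integral_of_le hx0, integral_cpow]
  · rw [show -(s+1)+1 = -s by ring]
    push_cast
    field_simp
    ring
  · right
    refine ⟨fun h => hs0 (by linear_combination -h), ?_⟩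
    rw [uIcc_of_le hx0]
    intro h
    have := h.1
    linarith

lemma cpow_deriv {a : ℝ} (ha : 0 < a) (s : ℂ) :
    HasDerivAt (fun z : ℂ => (a:ℂ)^(-z)) (-(Real.log a) * (a:ℂ)^(-s)) s := by
  have := (hasDerivAt_neg s).const_cpow (c := (a:ℂ)) (Or.inl (by exact_mod_cast ha.ne'))
  refine this.congr_deriv ?_
  rw [Complex.ofReal_log ha.le]; ring

end LW
end

section
namespace LW
open Complex Topology MeasureTheory ProbabilityTheory

/-- the one-signed function -/
noncomputable def gg (ε C x0 x : ℝ) : ℝ := ε * (Li x - Pp x) + (Iic x0).indicator (fun _ => C) x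

lemma gg_aem (ε C x0 : ℝ) : AEMeasurable (gg ε C x0) (volume.restrict (Ioi (2:ℝ))) := by
  unfold gg
  refine ((Li_aem.sub Pp_meas.aemeasurable).const_mul ε).add ?_
  exact (measurable_const.indicator measurableSet_Iic).aemeasurable

lemma gg_mellin {ε C x0 : ℝ} (hx0 : 2 ≤ x0) {s : ℂ} (hs : 1 < s.re) :
    s * ∫ x in Ioi (2:ℝ), (gg ε C x0 x : ℂ) * (x:ℂ)^(-(s+1)) =
      ε * (AA s - LSeries (fun n => (ind n : ℂ)) s) + C * ((2:ℂ)^(-s) - (x0:ℂ)^(-s)) := by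
  have h1 := bd_integrable Li_aem Li_bd hs
  have h2 := bd_integrable (f := Pp) (K := 1) Pp_meas.aemeasurable
    (fun x hx => by rw [abs_of_nonneg (Pp_nonneg x), one_mul]; exact Pp_le (by linarith)) hs
  have h3 : IntegrableOn (fun x : ℝ => (x:ℂ)^(-(s+1))) (Ioi 2) :=
    integrableOn_Ioi_cpow_of_lt (by simp; linarith) (by norm_num)
  have h4 : IntegrableOn ((Iic x0).indicator (fun x : ℝ => (x:ℂ)^(-(s+1)))) (Ioi 2) :=
    h3.indicator measurableSet_Iic
  have e : ∀ x : ℝ, (gg ε C x0 x : ℂ) * (x:ℂ)^(-(s+1)) =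
      ε * ((Li x : ℂ) * (x:ℂ)^(-(s+1)) - (Pp x : ℂ) * (x:ℂ)^(-(s+1))) +
      C * (Iic x0).indicator (fun x : ℝ => (x:ℂ)^(-(s+1))) x := by
    intro x
    unfold gg
    by_cases hx : x ∈ Iic x0
    · rw [indicator_of_mem hx, indicator_of_mem hx]; push_cast; ring
    · rw [indicator_of_notMem hx, indicator_of_notMem hx]; push_cast; ring
  simp_rw [e]
  have h5 : IntegrableOn (fun x : ℝ => (ε:ℂ) * ((Li x : ℂ) * (x:ℂ)^(-(s+1)) - (Pp x : ℂ) * (x:ℂ)^(-(s+1)))) (Ioi 2) :=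
    (h1.sub h2).const_mul _
  rw [integral_add h5 (h4.const_mul _), integral_const_mul, integral_const_mul,
    integral_sub h1 h2, setIntegral_indicator measurableSet_Iic, Ioi_inter_Iic, ← Li_mellin hs,
    ← Pp_mellin hs, ← const_mellin hx0 hs]
  ring

lemma final {ε T : ℝ} (hε : ε = 1 ∨ ε = -1) (h : ∀ x > T, 0 ≤ ε * (Li x - primePi x)) : False := by
  set x0 : ℝ := max T 2 + 1 with hx0
  have hx02 : 2 ≤ x0 := by have := le_max_right T 2; linarith
  have hx0T : T < x0 := by have := le_max_left T 2; linarith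
  have hl2 := log_pos2 (le_refl (2:ℝ))
  set C : ℝ := x0 / Real.log 2 + x0 with hC
  have hC0 : 0 ≤ C := by positivity
  have hpp : ∀ x > (2:ℝ), (primePi x : ℝ) = Pp x := fun x hx => primePi_eq x (by linarith)
  have habs : ∀ x > (2:ℝ), |ε * (Li x - Pp x)| ≤ x / Real.log 2 + x := by
    intro x hx
    have h1 := Li_nonneg hx.le
    have h2 := Li_le hx.le
    have h3 := Pp_nonneg x
    have h4 := Pp_le (by linarith : 0 ≤ x)
    have h5 : |ε| = 1 := by rcases hε with h | h <;> simp [h]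
    rw [abs_mul, h5, one_mul, abs_le]
    constructor <;> linarith
  have hg0 : ∀ x > (2:ℝ), 0 ≤ gg ε C x0 x := by
    intro x hx
    unfold gg
    by_cases hx' : x ∈ Iic x0
    · rw [indicator_of_mem hx']
      have h1 := (abs_le.1 (habs x hx)).1
      have h2 : x ≤ x0 := hx'
      have h3 : x / Real.log 2 + x ≤ C := by rw [hC]; gcongr
      linarith
    · rw [indicator_of_notMem hx', add_zero, ← hpp x hx]
      exact h x (hx0T.trans (not_le.1 hx'))
  have hgK : ∀ x > (2:ℝ), gg ε C x0 x / x ≤ 1 / Real.log 2 + 1 + C := by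
    intro x hx
    have hx0' : 0 < x := by linarith
    rw [div_le_iff₀ hx0']
    have h1 := (abs_le.1 (habs x hx)).2
    have h2 : (Iic x0).indicator (fun _ => C) x ≤ C := by
      by_cases hx' : x ∈ Iic x0
      · rw [indicator_of_mem hx']
      · rw [indicator_of_notMem hx']; exact hC0
    unfold gg
    have h3 : C ≤ C * x := by nlinarith
    have h4 : x / Real.log 2 = 1 / Real.log 2 * x := by ring
    nlinarith
  set d : ℝ → ℝ := fun x => gg ε C x0 x / x with hd
  have hdm : AEMeasurable d (volume.restrict (Ioi (2:ℝ))) := (gg_aem ε C x0).div aemeasurable_id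
  have hd0 : ∀ x > (2:ℝ), 0 ≤ d x := fun x hx => div_nonneg (hg0 x hx) (by linarith)
  have hmgf : ∀ s : ℂ, 1 < s.re → s * complexMGF (fun x => - Real.log x) (dens d) s =
      ε * (AA s - LSeries (fun n => (ind n : ℂ)) s) + C * ((2:ℂ)^(-s) - (x0:ℂ)^(-s)) := by
    intro s hs
    rw [← gg_mellin hx02 hs]
    congr 1
    unfold complexMGF
    rw [dens_integral hdm hd0]
    apply setIntegral_congr_fun measurableSet_Ioi
    intro x hx
    have hx' : (2:ℝ) < x := hx
    have hxc : (x:ℂ) ≠ 0 := by exact_mod_cast (by linarith : x ≠ 0)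
    show _ * cexp (s * ((-Real.log x : ℝ):ℂ)) = (gg ε C x0 x : ℂ) * (x:ℂ)^(-(s+1))
    rw [cexp_log (by linarith), show -(s+1) = -s - 1 by ring, Complex.cpow_sub _ _ hxc, Complex.cpow_one]
    simp only [hd]
    push_cast
    field_simp
  have hder : ∀ s : ℂ, 1 < s.re → deriv (fun z => z * complexMGF (fun x => - Real.log x) (dens d) z) s =
      ε * (-(2:ℂ)^(1-s)/(s-1) + LSeries (LSeries.logMul (fun n => (ind n:ℂ))) s) +
        C * (-Real.log 2 * (2:ℂ)^(-s) + Real.log x0 * (x0:ℂ)^(-s)) := by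
    intro s hs
    have h1 := AA_deriv hs
    have h2 := LSeries_hasDerivAt (ind_absc hs)
    have h3 := cpow_deriv (by norm_num : (0:ℝ) < 2) s
    have h4 := cpow_deriv (by linarith : (0:ℝ) < x0) s
    have h5 := ((h1.sub h2).const_mul (ε:ℂ)).add ((h3.sub h4).const_mul (C:ℂ))
    have hev : (fun z => z * complexMGF (fun x => - Real.log x) (dens d) z) =ᶠ[𝓝 s]
        fun z => ε * (AA z - LSeries (fun n => (ind n : ℂ)) z) + C * (((2:ℝ):ℂ)^(-z) - (x0:ℂ)^(-z)) := by
      have : {z : ℂ | 1 < z.re} ∈ 𝓝 s := (isOpen_lt continuous_const Complex.continuous_re).mem_nhds hs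
      filter_upwards [this] with z hz
      rw [hmgf z hz]; push_cast; rfl
    rw [hev.deriv_eq]
    refine (HasDerivAt.deriv h5).trans ?_
    push_cast
    ring
  refine core (μ := dens d) (Y := fun x => - Real.log x) Real.measurable_log.neg (dens_Y d)
    (dens_exp hdm hd0 hgK) (R := RR ε C x0) hε (RR_diff (by linarith)) ?_ (fun l => RR_lim (by linarith) l)
  intro s hs
  rw [hder s hs]
  exact RR_identity hs

end LW
end

/-- (Littlewood, 1914) The difference `π(x) − Li(x)` changes sign infinitely often. -/
theorem littlewood_sign_changes :
    ∀ T : ℝ,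
      (∃ x : ℝ, T < x ∧ (primePi x : ℝ) > Li x) ∧
      (∃ y : ℝ, T < y ∧ (primePi y : ℝ) < Li y) := by
  intro T
  constructor
  · by_contra hc
    push Not at hc
    exact LW.final (ε := 1) (T := T) (Or.inl rfl) fun x hx => by
      have := hc x hx
      linarith
  · by_contra hc
    push Not at hc
    exact LW.final (ε := -1) (T := T) (Or.inr rfl) fun x hx => by
      have := hc x hx
      linarith
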